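/- Let K ⊂ ℝ^{n+1} be a smooth, strictly convex body with the origin in its interior, with support function h, Gauss curvature 𝒦, inverse Gauss map X = Dh, centro-affine metric g, and measure dV = h σ_n dμ. Then for every positive function f ∈ C²(S^n): ∫ f² ( ⟨∇̄ log(h^{n+2}/𝒦), h X⟩ − |X|² |∇ log f|_g² ) dV ≤ n |∫ f X dV|² / ∫ dV, where ∇ and |·|_g are the gradient and norm with respect to the centro-affine metric g, and |∫ f X dV| is the Euclidean norm of the vector ∫ f X dV ∈ ℝ^{n+1}. -/

import Mathlib

open MeasureTheory Matrix Metric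
open scoped RealInnerProductSpace

noncomputable section

/-- Euclidean space `ℝ^{n+1}`. -/
abbrev Euc (n : ℕ) : Type := EuclideanSpace ℝ (Fin (n + 1))

/-- The Euclidean Hessian matrix of `H : ℝ^{n+1} → ℝ` at `x`. -/
def ehess (n : ℕ) (H : Euc n → ℝ) (x : Euc n) : Matrix (Fin (n + 1)) (Fin (n + 1)) ℝ :=
  Matrix.of fun i j =>
    fderiv ℝ (fun y => fderiv ℝ H y (EuclideanSpace.single j 1)) x (EuclideanSpace.single i 1)

/-- For the 1-homogeneous extension `H` of the support function `h` and `x ∈ S^n`, the matrix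
`D²H(x) + h(x)·x xᵀ`.  Its restriction to the tangent space `x^⊥ = T_x S^n` is
`A[h] = ∇̄²h + h ḡ`, and `x` is an eigenvector with eigenvalue `h(x)`. -/
def bmat (n : ℕ) (H : Euc n → ℝ) (x : Euc n) : Matrix (Fin (n + 1)) (Fin (n + 1)) ℝ :=
  ehess n H x + Matrix.of fun i j => H x * (x i * x j)

/-- `σ_n = det A[h] = det(∇̄²h + h ḡ)/det ḡ`, computed as `det(bmat)/h`. -/
def sigman (n : ℕ) (H : Euc n → ℝ) (x : Euc n) : ℝ :=
  Matrix.det (bmat n H x) / H x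

/-- The Gauss curvature `𝒦 = 1/σ_n`. -/
def gaussCurv (n : ℕ) (H : Euc n → ℝ) (x : Euc n) : ℝ := (sigman n H x)⁻¹

/-- The round (spherical) gradient `∇̄f` at `x ∈ S^n`: the Euclidean gradient of the
0-homogeneous extension `y ↦ f(y/‖y‖)`.  It depends only on `f|_{S^n}` and lies in `T_x S^n`. -/
def sphGrad (n : ℕ) (f : Euc n → ℝ) (x : Euc n) : Euc n :=
  gradient (fun y => f (‖y‖⁻¹ • y)) x

/-- The function `log (h^{n+2}/𝒦)` (as a function of `y`; on the sphere it agrees with the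
centro-affine expression appearing in the paper). -/
def logQ (n : ℕ) (H : Euc n → ℝ) (y : Euc n) : ℝ :=
  Real.log ((H y) ^ (n + 2) / gaussCurv n H y)

/-- The centro-affine inner product `g(∇f, ∇u) = h ⟨A[h]⁻¹ ∇̄f, ∇̄u⟩` of the `g`-gradients of
`f` and `u`, where `g = A[h]/h` is the centro-affine metric. -/
def gInner (n : ℕ) (H f u : Euc n → ℝ) (x : Euc n) : ℝ :=
  H x * ∑ i, (bmat n H x)⁻¹.mulVec (fun j => sphGrad n f x j) i * sphGrad n u x i

/-- The squared centro-affine norm `|∇f|_g²` of the `g`-gradient of `f`. -/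
def gNormSq (n : ℕ) (H f : Euc n → ℝ) (x : Euc n) : ℝ := gInner n H f f x

/-- The centro-affine Laplacian `Δf = div_g(∇ f)` (with respect to the centro-affine connection
`∇` induced by the centro-affine normal `ξ = X`, and the centro-affine metric `g = A[h]/h`),
computed via the identity `Δf = tr_g(A[hf]/h) - n f`, i.e.
`Δf = tr(B[h]⁻¹ B[hf]) - (n+1) f` where `B[u] = D²ũ + u·x xᵀ` for the 1-homogeneous
extension `ũ` of `u`. -/
def caLap (n : ℕ) (H f : Euc n → ℝ) (x : Euc n) : ℝ :=
  Matrix.trace ((bmat n H x)⁻¹ * bmat n (fun y => H y * f (‖y‖⁻¹ • y)) x) - (n + 1) * f x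

/-- The spherical Lebesgue measure on `S^n ⊂ ℝ^{n+1}` (up to a positive constant). -/
def sphMeasure (n : ℕ) : Measure (sphere (0 : Euc n) 1) :=
  (volume : Measure (Euc n)).toSphere

/-- The density of the cone-volume-type measure `dV = h σ_n dμ` with respect to the spherical
Lebesgue measure. -/
def volDens (n : ℕ) (H : Euc n → ℝ) (x : Euc n) : ℝ := H x * sigman n H x

section BMProof

section


section PrekopaLeindler
open scoped ENNReal

lemma bm_compact {K L C : Set ℝ} (hK : IsCompact K) (hL : IsCompact L) (hKn : K.Nonempty)
    (hLn : L.Nonempty) (h : ∀ a ∈ K, ∀ b ∈ L, a + b ∈ C) :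
    volume K + volume L ≤ volume C := by
  have h1 : sSup K ∈ K := hK.sSup_mem hKn
  have h2 : sInf L ∈ L := hL.sInf_mem hLn
  set a1 := sSup K
  set b0 := sInf L
  have hsub : (fun a => a + b0) '' K ∪ (fun b => a1 + b) '' L ⊆ C := by
    rintro _ (⟨a, ha, rfl⟩ | ⟨b, hb, rfl⟩)
    · exact h _ ha _ h2
    · exact h _ h1 _ hb
  have hint : (fun a => a + b0) '' K ∩ (fun b => a1 + b) '' L ⊆ {a1 + b0} := by
    rintro _ ⟨⟨a, ha, rfl⟩, ⟨b, hb, hab⟩⟩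
    have := le_csSup hK.bddAbove ha
    have := csInf_le hL.bddBelow hb
    simp only [Set.mem_singleton_iff] at *
    change a1 + b = a + b0 at hab
    change a + b0 = a1 + b0
    change a ≤ a1 at *
    linarith
  have hd : AEDisjoint volume ((fun a => a + b0) '' K) ((fun b => a1 + b) '' L) :=
    measure_mono_null hint (by simp)
  have hm : MeasurableSet ((fun b => a1 + b) '' L) :=
    (hL.image (by fun_prop)).measurableSet
  calc volume K + volume L = volume ((fun a => a + b0) '' K) + volume ((fun b => a1 + b) '' L) := by
        rw [Set.image_add_right, Set.image_add_left, measure_preimage_add_right, measure_preimage_add]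
    _ = volume ((fun a => a + b0) '' K ∪ (fun b => a1 + b) '' L) :=
        (measure_union₀ hm.nullMeasurableSet hd).symm
    _ ≤ volume C := measure_mono hsub

lemma bm_one {A B C : Set ℝ} (hA : MeasurableSet A) (hB : MeasurableSet B) (hAn : A.Nonempty)
    (hBn : B.Nonempty) (h : ∀ a ∈ A, ∀ b ∈ B, a + b ∈ C) :
    volume A + volume B ≤ volume C := by
  obtain ⟨a0, ha0⟩ := hAn
  obtain ⟨b0, hb0⟩ := hBn
  rw [hA.measure_eq_iSup_isCompact, hB.measure_eq_iSup_isCompact]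
  simp only [iSup_and']
  refine ENNReal.biSup_add_biSup_le' ⟨∅, by simp⟩ ⟨∅, by simp⟩ ?_
  rintro K ⟨hKA, hK⟩ L ⟨hLB, hL⟩
  refine (add_le_add (measure_mono (Set.subset_insert a0 K))
    (measure_mono (Set.subset_insert b0 L))).trans ?_
  refine bm_compact (hK.insert a0) (hL.insert b0) ⟨a0, by simp⟩ ⟨b0, by simp⟩ ?_
  intro a ha b hb
  refine h a ?_ b ?_
  · rcases ha with rfl | ha
    exacts [ha0, hKA ha]
  · rcases hb with rfl | hb
    exacts [hb0, hLB hb]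

lemma lintegral_layer {f : ℝ → ℝ≥0∞} (hf : Measurable f) (hf1 : ∀ x, f x ≤ 1) :
    ∫⁻ x, f x = ∫⁻ t in Set.Ioi (0:ℝ), volume {x | ENNReal.ofReal t < f x} := by
  have hne : ∀ x, f x ≠ ∞ := fun x => ne_top_of_le_ne_top ENNReal.one_ne_top (hf1 x)
  have := lintegral_eq_lintegral_meas_lt (volume : Measure ℝ) (f := fun x => (f x).toReal)
    (Filter.Eventually.of_forall fun x => ENNReal.toReal_nonneg)
    hf.ennreal_toReal.aemeasurable
  simp only [ENNReal.ofReal_toReal (hne _)] at this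
  rw [this]
  refine setLIntegral_congr_fun measurableSet_Ioi fun t ht => ?_
  congr 1
  ext x
  exact (ENNReal.ofReal_lt_iff_lt_toReal (le_of_lt ht) (hne x)).symm

/-- normalized 1D -/
lemma pl_norm {f g h : ℝ → ℝ≥0∞} (hf : Measurable f) (hg : Measurable g) (hh : Measurable h)
    (hf1 : ⨆ x, f x = 1) (hg1 : ⨆ x, g x = 1)
    (H : ∀ x y, f x * g y ≤ h (x + y) ^ 2) :
    (∫⁻ x, f x) + (∫⁻ x, g x) ≤ ∫⁻ x, h x := by
  have hfb : ∀ x, f x ≤ 1 := fun x => hf1 ▸ le_iSup f x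
  have hgb : ∀ x, g x ≤ 1 := fun x => hg1 ▸ le_iSup g x
  have hle : ∫⁻ x, min (h x) 1 ≤ ∫⁻ x, h x := lintegral_mono fun x => min_le_left _ _
  refine le_trans ?_ hle
  rw [lintegral_layer hf hfb, lintegral_layer hg hgb,
    lintegral_layer (hh.min measurable_const) (fun x => min_le_right _ _)]
  rw [← lintegral_add_left']
  swap
  · refine Measurable.aemeasurable ?_
    refine Antitone.measurable ?_
    intro s t hst
    refine measure_mono fun x hx => ?_
    exact lt_of_le_of_lt (ENNReal.ofReal_le_ofReal hst) hx
  refine setLIntegral_mono' measurableSet_Ioi fun t ht => ?_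
  have ht0 : (0:ℝ) < t := ht
  by_cases ht1 : t < 1
  · refine bm_one (measurableSet_lt measurable_const hf) (measurableSet_lt measurable_const hg)
      ?_ ?_ ?_
    · have : ENNReal.ofReal t < ⨆ x, f x := by rw [hf1]; simpa using ht1
      obtain ⟨x, hx⟩ := lt_iSup_iff.1 this
      exact ⟨x, hx⟩
    · have : ENNReal.ofReal t < ⨆ x, g x := by rw [hg1]; simpa using ht1
      obtain ⟨x, hx⟩ := lt_iSup_iff.1 this
      exact ⟨x, hx⟩
    · intro a ha b hb
      simp only [Set.mem_setOf_eq] at *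
      refine lt_min ?_ (by simpa using ht1)
      by_contra hcon
      push Not at hcon
      have h1 : ENNReal.ofReal t * ENNReal.ofReal t < f a * g b :=
        ENNReal.mul_lt_mul ha hb
      have h2 : h (a+b)^2 ≤ ENNReal.ofReal t * ENNReal.ofReal t := by
        rw [sq]; exact mul_le_mul' hcon hcon
      exact absurd (h1.trans_le ((H a b).trans h2)) (lt_irrefl _)
  · have hf0 : {x | ENNReal.ofReal t < f x} = ∅ := by
      ext x
      simp only [Set.mem_setOf_eq, Set.mem_empty_iff_false, iff_false, not_lt]
      refine (hfb x).trans ?_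
      simpa using ht1
    have hg0 : {x | ENNReal.ofReal t < g x} = ∅ := by
      ext x
      simp only [Set.mem_setOf_eq, Set.mem_empty_iff_false, iff_false, not_lt]
      refine (hgb x).trans ?_
      simpa using ht1
    simp [hf0, hg0]

lemma ennreal_amgm (a b : ℝ≥0∞) : 4 * (a * b) ≤ (a + b) ^ 2 := by
  by_cases ha : a = ∞
  · subst ha; simp
  by_cases hb : b = ∞
  · subst hb; simp
  lift a to NNReal using ha
  lift b to NNReal using hb
  norm_cast
  have : (4:ℝ) * (a * b) ≤ (a + b)^2 := by nlinarith [sq_nonneg ((a:ℝ) - b)]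
  exact_mod_cast this

lemma pl_bdd {f g h : ℝ → ℝ≥0∞} (hf : Measurable f) (hg : Measurable g) (hh : Measurable h)
    (hf1 : ⨆ x, f x ≠ ∞) (hg1 : ⨆ x, g x ≠ ∞)
    (H : ∀ x y, f x * g y ≤ h (x + y) ^ 2) :
    4 * ((∫⁻ x, f x) * ∫⁻ x, g x) ≤ (∫⁻ x, h x) ^ 2 := by
  set a := ⨆ x, f x with ha
  set b := ⨆ x, g x with hb
  by_cases ha0 : a = 0
  · have : ∀ x, f x = 0 := fun x => le_antisymm (ha0 ▸ le_iSup f x) bot_le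
    simp [this]
  by_cases hb0 : b = 0
  · have : ∀ x, g x = 0 := fun x => le_antisymm (hb0 ▸ le_iSup g x) bot_le
    simp [this]
  set c : ℝ≥0∞ := (a⁻¹ * b⁻¹) ^ (1/2 : ℝ) with hc
  have hc2 : c ^ 2 = a⁻¹ * b⁻¹ := by
    rw [hc, ← ENNReal.rpow_natCast, ← ENNReal.rpow_mul]; norm_num
  have hai : a⁻¹ * a = 1 := ENNReal.inv_mul_cancel ha0 hf1
  have hbi : b⁻¹ * b = 1 := ENNReal.inv_mul_cancel hb0 hg1
  have key := pl_norm (f := fun x => a⁻¹ * f x) (g := fun x => b⁻¹ * g x) (h := fun x => c * h x)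
    (hf.const_mul _) (hg.const_mul _) (hh.const_mul _)
    (by rw [← ENNReal.mul_iSup, ← ha, hai]) (by rw [← ENNReal.mul_iSup, ← hb, hbi])
    (fun x y => by
      rw [mul_pow, hc2, mul_mul_mul_comm]
      exact mul_le_mul_right (H x y) _)
  rw [lintegral_const_mul _ hf, lintegral_const_mul _ hg, lintegral_const_mul _ hh] at key
  have h2 := (ennreal_amgm _ _).trans (pow_le_pow_left' key 2)
  rw [mul_pow, hc2, mul_mul_mul_comm] at h2
  have h3 := mul_le_mul_right h2 (a * b)
  have e : (a * b) * (a⁻¹ * b⁻¹) = 1 := by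
    rw [mul_mul_mul_comm, mul_comm a, mul_comm b, hai, hbi, one_mul]
  calc 4 * ((∫⁻ x, f x) * ∫⁻ x, g x)
      = ((a * b) * (a⁻¹ * b⁻¹)) * (4 * ((∫⁻ x, f x) * ∫⁻ x, g x)) := by rw [e, one_mul]
    _ = (a * b) * (4 * (a⁻¹ * b⁻¹ * ((∫⁻ x, f x) * ∫⁻ x, g x))) := by ring
    _ ≤ (a * b) * (a⁻¹ * b⁻¹ * (∫⁻ x, h x) ^ 2) := h3
    _ = ((a * b) * (a⁻¹ * b⁻¹)) * (∫⁻ x, h x) ^ 2 := by ring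
    _ = _ := by rw [e, one_mul]

lemma lintegral_trunc {f : ℝ → ℝ≥0∞} (hf : Measurable f) :
    ∫⁻ x, f x = ⨆ k : ℕ, ∫⁻ x, min (f x) k := by
  rw [← lintegral_iSup]
  · congr 1
    ext x
    refine le_antisymm ?_ (iSup_le fun k => min_le_left _ _)
    refine le_of_forall_lt fun c hc => ?_
    obtain ⟨k, hk⟩ := ENNReal.exists_nat_gt (ne_top_of_lt hc)
    exact lt_iSup_iff.2 ⟨k, lt_min hc hk⟩
  · intro k; exact hf.min measurable_const
  · intro i j hij x
    exact min_le_min le_rfl (by exact_mod_cast hij)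

lemma pl_one {f g h : ℝ → ℝ≥0∞} (hf : Measurable f) (hg : Measurable g) (hh : Measurable h)
    (H : ∀ x y, f x * g y ≤ h (x + y) ^ 2) :
    4 * ((∫⁻ x, f x) * ∫⁻ x, g x) ≤ (∫⁻ x, h x) ^ 2 := by
  rw [lintegral_trunc hf, lintegral_trunc hg]
  simp only [ENNReal.iSup_mul, ENNReal.mul_iSup]
  refine iSup_le fun j => iSup_le fun k => ?_
  refine pl_bdd (hf.min measurable_const) (hg.min measurable_const) hh ?_ ?_ ?_
  · exact ne_top_of_le_ne_top (ENNReal.natCast_ne_top _) (iSup_le fun x => min_le_right _ _)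
  · exact ne_top_of_le_ne_top (ENNReal.natCast_ne_top _) (iSup_le fun x => min_le_right _ _)
  · intro x y
    exact (mul_le_mul' (min_le_left _ _) (min_le_left _ _)).trans (H x y)

lemma pl_pi (d : ℕ) : ∀ {f g h : (Fin d → ℝ) → ℝ≥0∞}, Measurable f → Measurable g → Measurable h →
    (∀ x y, f x * g y ≤ h (x + y) ^ 2) →
    4 ^ d * ((∫⁻ x, f x) * ∫⁻ x, g x) ≤ (∫⁻ x, h x) ^ 2 := by
  induction d with
  | zero =>
    intro f g h hf hg hh H
    rw [volume_pi, Measure.pi_of_empty _ 0]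
    simp only [pow_zero, one_mul]
    rw [lintegral_dirac, lintegral_dirac, lintegral_dirac]
    simpa using H 0 0
  | succ d ih =>
    intro f g h hf hg hh H
    let e := (MeasurableEquiv.piFinSuccAbove (fun _ : Fin (d+1) => ℝ) 0).symm
    have he : MeasurePreserving e (volume.prod volume) volume :=
      (volume_preserving_piFinSuccAbove (fun _ : Fin (d+1) => ℝ) 0).symm
    have hadd : ∀ s t x y, e (s + t, x + y) = e (s, x) + e (t, y) := by
      intro s t x y
      ext i
      simp only [e, MeasurableEquiv.piFinSuccAbove_symm_apply, Pi.add_apply]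
      refine Fin.cases ?_ (fun i => ?_) i <;> simp
    have hI : ∀ u : (Fin (d+1) → ℝ) → ℝ≥0∞, Measurable u →
        ∫⁻ x, u x = ∫⁻ s : ℝ, ∫⁻ x : Fin d → ℝ, u (e (s, x)) := by
      intro u hu
      rw [← he.lintegral_comp hu]
      exact lintegral_prod _ (hu.comp e.measurable).aemeasurable
    have hM : ∀ u : (Fin (d+1) → ℝ) → ℝ≥0∞, Measurable u →
        Measurable fun s : ℝ => ∫⁻ x : Fin d → ℝ, u (e (s, x)) := by
      intro u hu
      exact (hu.comp e.measurable).lintegral_prod_right'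
    have hS : ∀ u : (Fin (d+1) → ℝ) → ℝ≥0∞, Measurable u → ∀ s,
        Measurable fun x : Fin d → ℝ => u (e (s, x)) := by
      intro u hu s
      exact (hu.comp e.measurable).comp measurable_prodMk_left
    rw [hI f hf, hI g hg, hI h hh]
    have key := pl_one (f := fun s => 2 ^ d * ∫⁻ x : Fin d → ℝ, f (e (s, x)))
      (g := fun s => 2 ^ d * ∫⁻ x : Fin d → ℝ, g (e (s, x)))
      (h := fun s => ∫⁻ x : Fin d → ℝ, h (e (s, x)))
      ((hM f hf).const_mul _) ((hM g hg).const_mul _) (hM h hh) (by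
        intro s t
        have := ih (hS f hf s) (hS g hg t) (hS h hh (s+t)) (fun x y => by
          rw [hadd]; exact H _ _)
        refine le_trans (le_of_eq ?_) this
        rw [mul_mul_mul_comm, ← mul_pow]; norm_num)
    rw [lintegral_const_mul _ (hM f hf), lintegral_const_mul _ (hM g hg)] at key
    refine le_trans (le_of_eq ?_) key
    rw [mul_mul_mul_comm, ← mul_pow, pow_succ', mul_assoc]
    norm_num

/-- Brunn-Minkowski, multiplicative form -/
lemma bm_euc (d : ℕ) {A B C : Set (EuclideanSpace ℝ (Fin d))} (hA : MeasurableSet A)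
    (hB : MeasurableSet B) (hC : MeasurableSet C) (h : ∀ a ∈ A, ∀ b ∈ B, a + b ∈ C) :
    4 ^ d * (volume A * volume B) ≤ volume C ^ 2 := by
  have he := (PiLp.volume_preserving_toLp (Fin d))
  have hI : ∀ S : Set (EuclideanSpace ℝ (Fin d)), MeasurableSet S →
      volume S = ∫⁻ x : Fin d → ℝ, S.indicator 1 (WithLp.toLp 2 x) := by
    intro S hS
    rw [← lintegral_indicator_one hS]
    exact (he.lintegral_comp (measurable_one.indicator hS)).symm
  have hM : ∀ S : Set (EuclideanSpace ℝ (Fin d)), MeasurableSet S →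
      Measurable fun x : Fin d → ℝ => (S.indicator 1 (WithLp.toLp 2 x) : ℝ≥0∞) := by
    intro S hS
    exact (measurable_one.indicator hS).comp he.measurable
  rw [hI A hA, hI B hB, hI C hC]
  refine pl_pi d (hM A hA) (hM B hB) (hM C hC) ?_
  intro x y
  by_cases ha : WithLp.toLp 2 x ∈ A
  · by_cases hb : WithLp.toLp 2 y ∈ B
    · have := h _ ha _ hb
      simp [ha, hb, this]
    · simp [hb]
  · simp [ha]

end PrekopaLeindler

end

section


/-- second derivative -/
def hs {n : ℕ} (H : Euc n → ℝ) (x : Euc n) : Euc n →L[ℝ] Euc n →L[ℝ] ℝ :=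
  fderiv ℝ (fderiv ℝ H) x

lemma hom0_fderiv_self {E W : Type*} [NormedAddCommGroup E] [NormedSpace ℝ E]
    [NormedAddCommGroup W] [NormedSpace ℝ W] {F : E → W} {x : E}
    (hF : ∀ c : ℝ, 0 < c → F (c • x) = F x) (hd : DifferentiableAt ℝ F x) :
    fderiv ℝ F x x = 0 := by
  have h1 : HasDerivAt (fun c : ℝ => c • x) x 1 := by
    simpa using (hasDerivAt_id (1:ℝ)).smul_const x
  have h2 : HasDerivAt (fun c : ℝ => F (c • x)) (fderiv ℝ F x x) 1 := by
    have hd' : HasFDerivAt F (fderiv ℝ F x) ((1:ℝ) • x) := by simpa using hd.hasFDerivAt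
    exact hd'.comp_hasDerivAt (1:ℝ) h1
  have h3 : HasDerivAt (fun c : ℝ => F (c • x)) 0 1 := by
    refine (hasDerivAt_const (1:ℝ) (F x)).congr_of_eventuallyEq ?_
    filter_upwards [lt_mem_nhds (zero_lt_one (α := ℝ))] with c hc
    exact hF c hc
  exact h2.unique h3

lemma hom1_fderiv_self {E : Type*} [NormedAddCommGroup E] [NormedSpace ℝ E]
    {F : E → ℝ} {x : E}
    (hF : ∀ c : ℝ, 0 < c → F (c • x) = c * F x) (hd : DifferentiableAt ℝ F x) :
    fderiv ℝ F x x = F x := by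
  have h1 : HasDerivAt (fun c : ℝ => c • x) x 1 := by
    simpa using (hasDerivAt_id (1:ℝ)).smul_const x
  have h2 : HasDerivAt (fun c : ℝ => F (c • x)) (fderiv ℝ F x x) 1 := by
    have hd' : HasFDerivAt F (fderiv ℝ F x) ((1:ℝ) • x) := by simpa using hd.hasFDerivAt
    exact hd'.comp_hasDerivAt (1:ℝ) h1
  have h3 : HasDerivAt (fun c : ℝ => F (c • x)) (F x) 1 := by
    have : HasDerivAt (fun c : ℝ => c * F x) (F x) 1 := by
      simpa using (hasDerivAt_id (1:ℝ)).mul_const (F x)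
    refine this.congr_of_eventuallyEq ?_
    filter_upwards [lt_mem_nhds (zero_lt_one (α := ℝ))] with c hc
    exact hF c hc
  exact h2.unique h3

lemma fderiv_scale {E W : Type*} [NormedAddCommGroup E] [NormedSpace ℝ E]
    [NormedAddCommGroup W] [NormedSpace ℝ W] {F : E → W} {c k : ℝ} (hc : 0 < c)
    (hF : ∀ x, F (c • x) = k • F x) (x : E) :
    fderiv ℝ F (c • x) = (c⁻¹ * k) • fderiv ℝ F x := by
  have h1 : fderiv ℝ (fun y => F (c • y)) x = c • fderiv ℝ F (c • x) := by
    rw [fderiv_comp_smul]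
  have h2 : fderiv ℝ (fun y => F (c • y)) x = k • fderiv ℝ F x := by
    have : (fun y => F (c • y)) = k • F := by ext y; exact hF y
    rw [this, fderiv_const_smul_field]; rfl
  rw [mul_smul, ← h2, h1, smul_smul, inv_mul_cancel₀ hc.ne', one_smul]

/-- bundle of hypotheses -/
structure Good (n : ℕ) (H : Euc n → ℝ) : Prop where
  hom : ∀ c : ℝ, 0 < c → ∀ x : Euc n, H (c • x) = c * H x
  conv : ConvexOn ℝ Set.univ H
  smooth : ContDiffOn ℝ (⊤ : ℕ∞) H {(0 : Euc n)}ᶜ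
  pos : ∀ x ∈ sphere (0 : Euc n) 1, 0 < H x
  posdef : ∀ x ∈ sphere (0 : Euc n) 1, (bmat n H x).PosDef

variable {n : ℕ} {H : Euc n → ℝ}

lemma sph_ne {θ : Euc n} (h : ‖θ‖ = 1) : θ ≠ 0 := by
  rintro rfl; simp at h

lemma sph_mem {θ : Euc n} (h : ‖θ‖ = 1) : θ ∈ sphere (0 : Euc n) 1 := by simpa using h

namespace Good

lemma cd (g : Good n H) {x : Euc n} (hx : x ≠ 0) : ContDiffAt ℝ (⊤ : ℕ∞) H x :=
  g.smooth.contDiffAt (isOpen_compl_singleton.mem_nhds hx)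

lemma cd1 (g : Good n H) {x : Euc n} (hx : x ≠ 0) : ContDiffAt ℝ (⊤ : ℕ∞) (fderiv ℝ H) x :=
  (g.cd hx).fderiv_right le_rfl

lemma cd2 (g : Good n H) {x : Euc n} (hx : x ≠ 0) : ContDiffAt ℝ (⊤ : ℕ∞) (hs H) x :=
  (g.cd1 hx).fderiv_right le_rfl

lemma da (g : Good n H) {x : Euc n} (hx : x ≠ 0) : DifferentiableAt ℝ H x :=
  (g.cd hx).differentiableAt (by simp)

lemma da1 (g : Good n H) {x : Euc n} (hx : x ≠ 0) : DifferentiableAt ℝ (fderiv ℝ H) x :=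
  (g.cd1 hx).differentiableAt (by simp)

lemma euler (g : Good n H) {x : Euc n} (hx : x ≠ 0) : fderiv ℝ H x x = H x :=
  hom1_fderiv_self (fun c hc => g.hom c hc x) (g.da hx)

lemma fd_hom (g : Good n H) {c : ℝ} (hc : 0 < c) (x : Euc n) :
    fderiv ℝ H (c • x) = fderiv ℝ H x := by
  rw [fderiv_scale (k := c) hc (fun x => by simpa using g.hom c hc x), inv_mul_cancel₀ hc.ne',
    one_smul]

lemma hs_hom (g : Good n H) {c : ℝ} (hc : 0 < c) (x : Euc n) :
    hs H (c • x) = c⁻¹ • hs H x := by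
  unfold hs
  rw [fderiv_scale (k := 1) hc (fun x => by simpa using g.fd_hom hc x), mul_one]

lemma hs_self (g : Good n H) {x : Euc n} (hx : x ≠ 0) : hs H x x = 0 :=
  hom0_fderiv_self (fun c hc => g.fd_hom hc x) (g.da1 hx)

lemma hs_symm (g : Good n H) {x : Euc n} (hx : x ≠ 0) (v w : Euc n) :
    hs H x v w = hs H x w v := by
  have := (g.cd hx).isSymmSndFDerivAt (by simp; exact WithTop.coe_le_coe.2 le_top)
  exact this v w

lemma hs_self' (g : Good n H) {x : Euc n} (hx : x ≠ 0) (v : Euc n) : hs H x v x = 0 := by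
  rw [g.hs_symm hx, g.hs_self hx]; rfl

lemma ehess_eq (g : Good n H) {x : Euc n} (hx : x ≠ 0) (i j : Fin (n+1)) :
    ehess n H x i j = hs H x (EuclideanSpace.single i 1) (EuclideanSpace.single j 1) := by
  unfold ehess hs
  simp only [Matrix.of_apply]
  rw [fderiv_clm_apply (g.da1 hx) (by fun_prop)]
  simp

lemma expand (v : Euc n) : v = ∑ i, v i • (EuclideanSpace.single i 1 : Euc n) := by
  ext j
  simp [Finset.sum_apply, Pi.single_apply]

lemma ehess_mulVec (g : Good n H) {x : Euc n} (hx : x ≠ 0) (w : Euc n) (i : Fin (n+1)) :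
    (ehess n H x *ᵥ w) i = hs H x (EuclideanSpace.single i 1) w := by
  conv_rhs => rw [expand w]
  simp only [Matrix.mulVec, dotProduct, map_sum, map_smul, g.ehess_eq hx, smul_eq_mul]
  exact Finset.sum_congr rfl fun j _ => mul_comm _ _

lemma hs_eq (g : Good n H) {x : Euc n} (hx : x ≠ 0) (v w : Euc n) :
    hs H x v w = (v : Fin (n+1) → ℝ) ⬝ᵥ (ehess n H x *ᵥ w) := by
  conv_lhs => rw [expand v]
  simp only [dotProduct, map_sum, map_smul, g.ehess_mulVec hx, smul_eq_mul,
    _root_.sum_apply, _root_.smul_apply]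

lemma inner_eq (v w : Euc n) : ⟪v, w⟫ = (v : Fin (n+1) → ℝ) ⬝ᵥ (w : Fin (n+1) → ℝ) := by
  simp only [PiLp.inner_apply, dotProduct]
  exact Finset.sum_congr rfl fun j _ => by simp [mul_comm]

lemma bmat_mulVec (g : Good n H) {x : Euc n} (hx : x ≠ 0) (w : Euc n) (i : Fin (n+1)) :
    (bmat n H x *ᵥ w) i = hs H x (EuclideanSpace.single i 1) w + H x * ⟪x, w⟫ * x i := by
  rw [bmat, Matrix.add_mulVec, Pi.add_apply, g.ehess_mulVec hx, inner_eq]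
  simp only [Matrix.mulVec, dotProduct, Matrix.of_apply, Finset.mul_sum, Finset.sum_mul]
  congr 1
  exact Finset.sum_congr rfl fun j _ => by ring

lemma bmat_form (g : Good n H) {x : Euc n} (hx : x ≠ 0) (v w : Euc n) :
    (v : Fin (n+1) → ℝ) ⬝ᵥ (bmat n H x *ᵥ w) = hs H x v w + H x * ⟪x, v⟫ * ⟪x, w⟫ := by
  have : (v : Fin (n+1) → ℝ) ⬝ᵥ (bmat n H x *ᵥ w) =
    ∑ i, v i * (hs H x (EuclideanSpace.single i 1) w + H x * ⟪x, w⟫ * x i) := by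
    simp only [dotProduct, g.bmat_mulVec hx]
  rw [this, g.hs_eq hx, inner_eq x v]
  simp only [dotProduct, g.ehess_mulVec hx, mul_add, Finset.sum_add_distrib, Finset.mul_sum,
    Finset.sum_mul]
  congr 1
  exact Finset.sum_congr rfl fun j _ => by ring

lemma form_pos (g : Good n H) {θ : Euc n} (hθ : ‖θ‖ = 1) {v : Euc n} (hv : v ≠ 0) :
    0 < hs H θ v v + H θ * ⟪θ, v⟫ * ⟪θ, v⟫ := by
  rw [← g.bmat_form (sph_ne hθ)]
  have := (g.posdef θ (sph_mem hθ)).dotProduct_mulVec_pos (x := (v : Fin (n+1) → ℝ)) (by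
    intro h; apply hv; ext i; exact congrFun h i)
  simpa using this

lemma Hpos (g : Good n H) {x : Euc n} (hx : x ≠ 0) : 0 < H x := by
  have h1 : 0 < ‖x‖ := norm_pos_iff.2 hx
  have h2 : H x = ‖x‖ * H (‖x‖⁻¹ • x) := by
    rw [← g.hom _ h1, smul_smul, mul_inv_cancel₀ h1.ne', one_smul]
  rw [h2]
  exact mul_pos h1 (g.pos _ (by simp [norm_smul, h1.ne']))

lemma Hzero (g : Good n H) : H 0 = 0 := by
  have := g.hom 2 (by norm_num) 0
  simp at this
  linarith

/-- support inequality -/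
lemma supp (g : Good n H) {θ : Euc n} (hθ : θ ≠ 0) (x : Euc n) : fderiv ℝ H θ x ≤ H x := by
  have hc : ConvexOn ℝ Set.univ (fun s : ℝ => H (θ + s • (x - θ))) := by
    have := g.conv.comp_affineMap (AffineMap.lineMap θ x)
    simp only [Set.preimage_univ] at this
    have e : (fun s : ℝ => H (θ + s • (x - θ))) = H ∘ ⇑(AffineMap.lineMap (k := ℝ) θ x) := by
      ext s
      simp [AffineMap.lineMap_apply, add_comm]
    rw [e]
    exact this
  have hd : HasDerivAt (fun s : ℝ => H (θ + s • (x - θ))) (fderiv ℝ H θ (x - θ)) 0 := by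
    have h1 : HasDerivAt (fun s : ℝ => θ + s • (x - θ)) (x - θ) 0 := by
      simpa using ((hasDerivAt_id (0:ℝ)).smul_const (x - θ)).const_add θ
    have hd' : HasFDerivAt H (fderiv ℝ H θ) (θ + (0:ℝ) • (x - θ)) := by
      simpa using (g.da hθ).hasFDerivAt
    exact hd'.comp_hasDerivAt (0:ℝ) h1
  have := hc.le_slope_of_hasDerivAt (Set.mem_univ 0) (Set.mem_univ 1) one_pos hd
  simp [slope_def_field, g.euler hθ] at this
  linarith

/-- local second order expansion, uniform -/
lemma taylor (g : Good n H) {θ₀ : Euc n} (hθ : θ₀ ≠ 0) {ω : ℝ} (hω : 0 < ω) :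
    ∀ᶠ p : Euc n × Euc n in nhds (θ₀, θ₀),
      |H p.2 - fderiv ℝ H p.1 p.2 - hs H θ₀ (p.2 - p.1) (p.2 - p.1) / 2| ≤ ω * ‖p.2 - p.1‖ ^ 2 := by
  have hst : HasStrictFDerivAt (fderiv ℝ H) (hs H θ₀) θ₀ :=
    (g.cd1 hθ).hasStrictFDerivAt (by simp)
  have h1 := hst.isLittleO.def hω
  -- pick a ball
  have h2 : ∀ᶠ p : Euc n × Euc n in nhds (θ₀, θ₀), p.1 ≠ 0 ∧ ‖fderiv ℝ H p.1 - fderiv ℝ H p.2 -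
      hs H θ₀ (p.1 - p.2)‖ ≤ ω * ‖p.1 - p.2‖ := by
    have : ∀ᶠ p : Euc n × Euc n in nhds (θ₀, θ₀), p.1 ≠ 0 :=
      continuous_fst.continuousAt.eventually_ne hθ
    exact this.and h1
  obtain ⟨r, hr, hball⟩ := Metric.eventually_nhds_iff_ball.1 h2
  have h3 : ∀ᶠ p : Euc n × Euc n in nhds (θ₀, θ₀), p ∈ ball (θ₀, θ₀) r := ball_mem_nhds _ hr
  filter_upwards [h3] with p hp
  obtain ⟨a, b⟩ := p
  rw [← ball_prod_same] at hp
  obtain ⟨ha, hb⟩ := hp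
  simp only at ha hb ⊢
  set S := segment ℝ a b
  have hSb : S ⊆ ball θ₀ r := (convex_ball θ₀ r).segment_subset ha hb
  have hpt : ∀ y ∈ S, y ≠ 0 ∧ ‖fderiv ℝ H y - fderiv ℝ H a - hs H θ₀ (y - a)‖ ≤ ω * ‖y - a‖ := by
    intro y hy
    exact hball (y, a) (by rw [← ball_prod_same]; exact ⟨hSb hy, ha⟩)
  have hSn : ∀ y ∈ S, ‖y - a‖ ≤ ‖b - a‖ := by
    intro y hy
    exact norm_sub_le_of_mem_segment hy
  have ha0 : a ≠ 0 := (hpt a (left_mem_segment ℝ a b)).1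
  set ψ : Euc n → ℝ := fun y => H y - hs H θ₀ (y - a) (y - a) / 2 with hψ
  have hsym : ∀ v w, hs H θ₀ v w = hs H θ₀ w v := g.hs_symm hθ
  have hd : ∀ y ∈ S, HasFDerivAt ψ (fderiv ℝ H y - hs H θ₀ (y - a)) y := by
    intro y hy
    have e1 : HasFDerivAt (fun y : Euc n => y - a) (ContinuousLinearMap.id ℝ (Euc n)) y :=
      (hasFDerivAt_id y).sub_const a
    have e2 : HasFDerivAt (fun y : Euc n => hs H θ₀ (y - a)) (hs H θ₀) y := by
      exact (hs H θ₀).hasFDerivAt.comp y e1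
    have e3 := (e2.clm_apply e1).mul_const ((2:ℝ)⁻¹)
    refine ((g.da (hpt y hy).1).hasFDerivAt.sub e3).congr_fderiv ?_
    ext v
    simp [hsym v y, hsym v a]
    ring
  have key := (convex_segment a b).norm_image_sub_le_of_norm_fderiv_le' (𝕜 := ℝ) (f := ψ)
    (C := ω * ‖b - a‖) (φ := fderiv ℝ H a) (x := a) (y := b)
    (fun y hy => (hd y hy).differentiableAt)
    (fun y hy => by
      rw [(hd y hy).fderiv]
      have := (hpt y hy).2
      rw [sub_right_comm]
      exact this.trans (mul_le_mul_of_nonneg_left (hSn y hy) hω.le))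
    (left_mem_segment ℝ a b) (right_mem_segment ℝ a b)
  have e : ψ b - ψ a - fderiv ℝ H a (b - a) = H b - fderiv ℝ H a b - hs H θ₀ (b - a) (b - a) / 2 := by
    simp only [hψ, map_sub, g.euler ha0, sub_self, map_zero, _root_.zero_apply]
    simp
    ring
  rw [e, Real.norm_eq_abs] at key
  calc _ ≤ _ := key
    _ = _ := by ring

/-- strict support inequality -/
lemma supp_strict (g : Good n H) {θ x : Euc n} (hθ : ‖θ‖ = 1) (hx : ‖x‖ = 1) (hne : x ≠ θ) :
    fderiv ℝ H θ x < H x := by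
  have hθ0 := sph_ne hθ
  have hx0 := sph_ne hx
  refine lt_of_le_of_ne (g.supp hθ0 x) fun heq => ?_
  set v := x - θ with hv
  -- decompose
  set l := ⟪θ, v⟫ with hl
  set w := v - l • θ with hw
  have hθθ : ⟪θ, θ⟫ = 1 := by simp [hθ]
  have hθw : ⟪θ, w⟫ = 0 := by rw [hw, inner_sub_right, inner_smul_right, hθθ]; linarith
  by_cases hw0 : w = 0
  · -- x parallel to θ
    have hxv : x = (1 + l) • θ := by
      have : v = l • θ := sub_eq_zero.1 hw0
      rw [add_smul, one_smul, ← this, hv]; abel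
    have hn : |1 + l| = 1 := by
      have := hx
      rw [hxv, norm_smul, hθ, mul_one] at this
      exact this
    rcases abs_eq_abs.1 (hn.trans abs_one.symm) with h | h
    · apply hne; rw [hxv, h, one_smul]
    · rw [hxv, map_smul, g.euler hθ0, h, smul_eq_mul] at heq
      have h1 := g.Hpos hθ0
      have h2 : 0 < H (-1 • θ) := g.Hpos (by simpa using hθ0)
      have h3 : ((-1:ℝ)) • θ = (-1:ℤ) • θ := by simp
      rw [h3] at heq
      linarith
  · have hpos : 0 < hs H θ v v := by
      have h1 := g.form_pos hθ hw0
      rw [hθw] at h1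
      have h2 : hs H θ w w = hs H θ v v := by
        rw [hw]
        simp [g.hs_self hθ0, g.hs_self' hθ0]
      rw [← h2]; linarith
    have hvn : 0 < ‖v‖ := norm_pos_iff.2 (sub_ne_zero.2 hne)
    obtain ⟨s, hs0, hs1, hT⟩ : ∃ s : ℝ, 0 < s ∧ s ≤ 1 ∧
        |H (θ + s • v) - fderiv ℝ H θ (θ + s • v) - hs H θ (s • v) (s • v) / 2| ≤
        hs H θ v v / (4 * ‖v‖^2) * ‖s • v‖ ^ 2 := by
      have hT := g.taylor hθ0 (ω := hs H θ v v / (4 * ‖v‖^2)) (by positivity)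
      have hc : Filter.Tendsto (fun s : ℝ => (θ, θ + s • v)) (nhdsWithin 0 (Set.Ioi 0))
          (nhds (θ, θ)) := by
        have : ContinuousAt (fun s : ℝ => (θ, θ + s • v)) 0 := by fun_prop
        have h := this.tendsto
        simp only [zero_smul, add_zero] at h
        exact h.mono_left nhdsWithin_le_nhds
      have h1 := hc.eventually hT
      have h2 : ∀ᶠ s : ℝ in nhdsWithin 0 (Set.Ioi 0), s ≤ 1 :=
        nhdsWithin_le_nhds (ge_mem_nhds one_pos)
      obtain ⟨s, ⟨h1, h2⟩, h3⟩ := ((h1.and h2).and self_mem_nhdsWithin).exists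
      refine ⟨s, h3, h2, ?_⟩
      simpa using h1
    have hup : H (θ + s • v) ≤ fderiv ℝ H θ (θ + s • v) := by
      have hcv := g.conv.2 (Set.mem_univ θ) (Set.mem_univ x) (sub_nonneg.2 hs1) hs0.le (by ring)
      have e : (1 - s) • θ + s • x = θ + s • v := by rw [hv, smul_sub, sub_smul, one_smul]; abel
      rw [e] at hcv
      simp only [smul_eq_mul] at hcv
      rw [← heq] at hcv
      rw [map_add, map_smul, hv, map_sub, g.euler hθ0, smul_eq_mul]
      linarith
    have h4 : hs H θ (s • v) (s • v) = s^2 * hs H θ v v := by simp; ring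
    have h5 : hs H θ v v / (4 * ‖v‖^2) * ‖s • v‖ ^ 2 = s^2 * hs H θ v v / 4 := by
      rw [norm_smul, mul_pow, Real.norm_eq_abs, sq_abs]
      field_simp
    rw [h4, h5] at hT
    have h6 := (abs_le.1 hT).1
    have h7 : 0 < s^2 * hs H θ v v := by positivity
    linarith

end Good

end

section


variable {n : ℕ} {H : Euc n → ℝ}

lemma grad_apply (F : Euc n → ℝ) (x : Euc n) (i : Fin (n+1)) :
    gradient F x i = fderiv ℝ F x (EuclideanSpace.single i 1) := by
  rw [← inner_gradient_left, EuclideanSpace.inner_single_right]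
  simp

/-- polar coordinates for lintegrals -/
lemma lint_polar (G : Euc n → ENNReal)
    (hG : Measurable fun p : sphere (0 : Euc n) 1 × Set.Ioi (0:ℝ) => G (p.2.1 • p.1.1)) :
    ∫⁻ x in {(0 : Euc n)}ᶜ, G x = ∫⁻ θ, ∫⁻ r, G (r.1 • θ.1)
      ∂(Measure.volumeIoiPow n) ∂(sphMeasure n) := by
  have hmp := Measure.measurePreserving_homeomorphUnitSphereProd (volume : Measure (Euc n))
  have hfr : Module.finrank ℝ (Euc n) - 1 = n := by simp
  rw [hfr] at hmp
  rw [← lintegral_subtype_comap (measurableSet_singleton _).compl]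
  have h1 := hmp.lintegral_comp_emb (homeomorphUnitSphereProd (Euc n)).measurableEmbedding
    (fun p : sphere (0 : Euc n) 1 × Set.Ioi (0:ℝ) => G (p.2.1 • p.1.1))
  rw [lintegral_prod _ hG.aemeasurable] at h1
  rw [sphMeasure, ← h1]
  refine lintegral_congr fun x => ?_
  congr 1
  have hx : ‖x.1‖ ≠ 0 := norm_ne_zero_iff.2 x.2
  simp [smul_smul, hx]

/-- polar coordinates for integrals -/
lemma int_polar (G : Euc n → ℝ)
    (hG : Integrable (fun p : sphere (0 : Euc n) 1 × Set.Ioi (0:ℝ) => G (p.2.1 • p.1.1))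
      ((sphMeasure n).prod (Measure.volumeIoiPow n))) :
    ∫ x in {(0 : Euc n)}ᶜ, G x = ∫ θ, ∫ r, G (r.1 • θ.1)
      ∂(Measure.volumeIoiPow n) ∂(sphMeasure n) := by
  have hmp := Measure.measurePreserving_homeomorphUnitSphereProd (volume : Measure (Euc n))
  have hfr : Module.finrank ℝ (Euc n) - 1 = n := by simp
  rw [hfr] at hmp
  rw [← integral_subtype_comap (measurableSet_singleton _).compl]
  have h1 := hmp.integral_comp (homeomorphUnitSphereProd (Euc n)).measurableEmbedding
    (fun p : sphere (0 : Euc n) 1 × Set.Ioi (0:ℝ) => G (p.2.1 • p.1.1))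
  rw [sphMeasure] at hG ⊢
  have : IsFiniteMeasure (volume : Measure (Euc n)).toSphere := inferInstance
  rw [integral_prod _ hG] at h1
  rw [← h1]
  refine integral_congr_ae (Filter.Eventually.of_forall fun x => ?_)
  have hx : ‖x.1‖ ≠ 0 := norm_ne_zero_iff.2 x.2
  simp [smul_smul, hx]

/-- the map -/
def TT (H : Euc n → ℝ) (x : Euc n) : Euc n := ‖x‖ • gradient H x

lemma det_rank (B : Matrix (Fin (n+1)) (Fin (n+1)) ℝ) (p θ : Fin (n+1) → ℝ) (h : ℝ) (hh : h ≠ 0)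
    (h1 : θ ᵥ* B = h • θ) (h2 : θ ⬝ᵥ p = 0) :
    (B + vecMulVec p θ).det = B.det := by
  have : B + vecMulVec p θ = (1 + vecMulVec (h⁻¹ • p) θ) * B := by
    rw [add_mul, one_mul, vecMulVec_mul, h1, smul_vecMulVec, vecMulVec_smul, smul_smul,
      inv_mul_cancel₀ hh, one_smul]
  rw [this, det_mul, vecMulVec_eq Unit, det_one_add_replicateCol_mul_replicateRow]
  simp [h2]

namespace Good

lemma grad_inner_self (g : Good n H) {x : Euc n} (hx : x ≠ 0) : ⟪gradient H x, x⟫ = H x := by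
  rw [inner_gradient_left, g.euler hx]

lemma grad_hom (g : Good n H) {c : ℝ} (hc : 0 < c) (x : Euc n) :
    gradient H (c • x) = gradient H x := by
  ext i; rw [grad_apply, grad_apply, g.fd_hom hc]

lemma volDens_eq (g : Good n H) {x : Euc n} (hx : x ≠ 0) :
    volDens n H x = (bmat n H x).det := by
  rw [volDens, sigman]; field_simp [(g.Hpos hx).ne']

lemma TT_deriv (g : Good n H) {x : Euc n} (hx : x ≠ 0) :
    DifferentiableAt ℝ (TT H) x ∧ (fderiv ℝ (TT H) x).det = volDens n H (‖x‖⁻¹ • x) := by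
  have hn : ‖x‖ ≠ 0 := norm_ne_zero_iff.2 hx
  have hn0 : 0 < ‖x‖ := norm_pos_iff.2 hx
  set θ := ‖x‖⁻¹ • x with hθ
  have hθ1 : ‖θ‖ = 1 := by simp [hθ, norm_smul, hn]
  have hθ0 := sph_ne hθ1
  have hc : ∀ i, HasFDerivAt (fun y => TT H y i)
      (‖x‖ • ((hs H x).flip (EuclideanSpace.single i 1)) + 
        (gradient H x i) • (‖x‖⁻¹ • innerSL ℝ x)) x := by
    intro i
    have e1 : HasFDerivAt (fun y : Euc n => fderiv ℝ H y (EuclideanSpace.single i 1)) 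
      ((hs H x).flip (EuclideanSpace.single i 1)) x := by
      have := (g.da1 hx).hasFDerivAt.clm_apply (hasFDerivAt_const (EuclideanSpace.single i (1:ℝ)) x)
      refine this.congr_fderiv ?_
      ext v; simp [hs]
    have e2 : HasFDerivAt (fun y : Euc n => ‖y‖) (‖x‖⁻¹ • innerSL ℝ x) x := by
      have e0 : HasFDerivAt (fun y : Euc n => ‖y‖ ^ 2) (2 • innerSL ℝ x) x := 
        (hasStrictFDerivAt_norm_sq x).hasFDerivAt
      have := e0.sqrt (by positivity)
      simp only [Real.sqrt_sq_eq_abs, abs_norm] at this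
      refine this.congr_fderiv ?_
      ext v
      simp
      field_simp
    have := e2.mul e1
    simp only [TT, PiLp.smul_apply, grad_apply, smul_eq_mul]
    exact this
  have hd : DifferentiableAt ℝ (TT H) x := by
    rw [differentiableAt_euclidean]
    exact fun i => (hc i).differentiableAt
  refine ⟨hd, ?_⟩
  have hco : ∀ v i, fderiv ℝ (TT H) x v i = ‖x‖ * hs H x v (EuclideanSpace.single i 1) +
      gradient H x i * (‖x‖⁻¹ * ⟪x, v⟫) := by
    intro v i
    have h1 := ((hasFDerivWithinAt_univ.2 hd.hasFDerivAt |> hasFDerivWithinAt_euclidean.1) i |>.hasFDerivAt Filter.univ_mem).unique (hc i)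
    have := congrArg (fun L => L v) h1
    simpa using this
  have hM : LinearMap.toMatrix (EuclideanSpace.basisFun (Fin (n+1)) ℝ).toBasis 
      (EuclideanSpace.basisFun (Fin (n+1)) ℝ).toBasis (fderiv ℝ (TT H) x : Euc n →ₗ[ℝ] Euc n) =
      bmat n H θ + vecMulVec (gradient H θ - H θ • θ : Euc n) θ := by
    ext i j
    have hx' : x = ‖x‖ • θ := by rw [hθ, smul_smul, mul_inv_cancel₀ hn, one_smul]
    have hxh : hs H x = ‖x‖⁻¹ • hs H θ := by
      conv_lhs => rw [hx']
      rw [g.hs_hom hn0]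
    have hxg : gradient H x = gradient H θ := by
      conv_lhs => rw [hx']
      rw [g.grad_hom hn0]
    have hxj : ‖x‖⁻¹ * x j = θ j := by simp [hθ]
    rw [LinearMap.toMatrix_apply]
    simp only [OrthonormalBasis.coe_toBasis, EuclideanSpace.basisFun_apply,
      OrthonormalBasis.coe_toBasis_repr_apply, EuclideanSpace.basisFun_repr,
      ContinuousLinearMap.coe_coe, hco, bmat, Matrix.add_apply, g.ehess_eq hθ0, Matrix.of_apply, 
      vecMulVec_apply, EuclideanSpace.inner_single_right, hxg, hxh]
    simp only [_root_.smul_apply, smul_eq_mul, PiLp.sub_apply, PiLp.smul_apply]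
    rw [g.hs_symm hθ0]
    simp only [conj_trivial, one_mul, hxj]
    field_simp
    ring
  rw [ContinuousLinearMap.det, ← LinearMap.det_toMatrix (EuclideanSpace.basisFun (Fin (n+1)) ℝ).toBasis, hM, 
    det_rank _ _ _ (H θ) (g.Hpos hθ0).ne', g.volDens_eq hθ0]
  · ext j
    have h1 := g.bmat_form hθ0 θ (EuclideanSpace.single j 1)
    rw [g.hs_self hθ0] at h1
    have h2 : ((EuclideanSpace.single j (1:ℝ) : Euc n) : Fin (n+1) → ℝ) = Pi.single j 1 := by
      ext k; simp [Pi.single_apply]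
    rw [h2, Matrix.mulVec_single_one] at h1
    simp [hθ1] at h1
    rw [EuclideanSpace.inner_single_right] at h1
    simp only [conj_trivial, one_mul] at h1
    exact h1
  · rw [← inner_eq, inner_sub_right, inner_smul_right, real_inner_comm, g.grad_inner_self hθ0]
    simp [hθ1]

lemma TT_inj (g : Good n H) : Set.InjOn (TT H) {(0 : Euc n)}ᶜ := by
  intro x hx y hy hxy
  have hx : x ≠ 0 := hx
  have hy : y ≠ 0 := hy
  have hnx : 0 < ‖x‖ := norm_pos_iff.2 hx
  have hny : 0 < ‖y‖ := norm_pos_iff.2 hy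
  set θ := ‖x‖⁻¹ • x with hθ
  set η := ‖y‖⁻¹ • y with hη
  have hθ1 : ‖θ‖ = 1 := by simp [hθ, norm_smul, hnx.ne']
  have hη1 : ‖η‖ = 1 := by simp [hη, norm_smul, hny.ne']
  have hx' : x = ‖x‖ • θ := by rw [hθ, smul_smul, mul_inv_cancel₀ hnx.ne', one_smul]
  have hy' : y = ‖y‖ • η := by rw [hη, smul_smul, mul_inv_cancel₀ hny.ne', one_smul]
  have hxg : gradient H x = gradient H θ := by
    conv_lhs => rw [hx']
    rw [g.grad_hom hnx]
  have hyg : gradient H y = gradient H η := by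
    conv_lhs => rw [hy']
    rw [g.grad_hom hny]
  unfold TT at hxy
  rw [hxg, hyg] at hxy
  have key : ∀ v, ‖x‖ * fderiv ℝ H θ v = ‖y‖ * fderiv ℝ H η v := by
    intro v
    have := congrArg (fun z => ⟪z, v⟫) hxy
    simpa [inner_smul_left] using this
  have k1 := key θ
  have k2 := key η
  rw [g.euler (sph_ne hθ1)] at k1
  rw [g.euler (sph_ne hη1)] at k2
  have p1 := g.Hpos (sph_ne hθ1)
  have p2 := g.Hpos (sph_ne hη1)
  have s1 := g.supp (sph_ne hη1) θ
  have s2 := g.supp (sph_ne hθ1) η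
  have hxy1 : ‖x‖ = ‖y‖ := by
    apply le_antisymm
    · refine le_of_mul_le_mul_right (a := H θ) ?_ p1
      rw [k1]; exact mul_le_mul_of_nonneg_left s1 hny.le
    · refine le_of_mul_le_mul_right (a := H η) ?_ p2
      rw [← k2]; exact mul_le_mul_of_nonneg_left s2 hnx.le
  have : θ = η := by
    by_contra hne
    have := g.supp_strict hη1 hθ1 hne
    rw [hxy1] at k1
    have := mul_left_cancel₀ hny.ne' k1
    linarith
  rw [hx', hy', hxy1, this]

end Good

end

section


variable {n : ℕ} {H : Euc n → ℝ}

lemma cont_sph {W : Type*} [TopologicalSpace W] {F : Euc n → W} (h : ∀ x, x ≠ 0 → ContinuousAt F x) :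
    Continuous (fun θ : sphere (0 : Euc n) 1 => F θ) := by
  rw [continuous_iff_continuousAt]
  intro θ
  exact ContinuousAt.comp (f := fun θ : sphere (0 : Euc n) 1 => θ.1) (g := F)
    (h θ.1 (sph_ne (by simpa using θ.2))) continuous_subtype_val.continuousAt

instance : IsFiniteMeasure (sphMeasure n) := by unfold sphMeasure; infer_instance

lemma int_sph {W : Type*} [NormedAddCommGroup W] 
    {F : sphere (0 : Euc n) 1 → W} (h : Continuous F) : Integrable F (sphMeasure n) := 
  h.integrable_of_hasCompactSupport (HasCompactSupport.of_compactSpace F)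

lemma cd_det {m : ℕ} {B : Euc n → Matrix (Fin m) (Fin m) ℝ} {x : Euc n} {k : WithTop ℕ∞}
    (h : ∀ i j, ContDiffAt ℝ k (fun y => B y i j) x) : ContDiffAt ℝ k (fun y => (B y).det) x := by
  simp only [Matrix.det_apply]
  refine ContDiffAt.sum fun σ _ => ?_
  refine ContDiffAt.const_smul _ ?_
  exact contDiffAt_prod fun i _ => h _ _

namespace Good

lemma cd_bmat (g : Good n H) {x : Euc n} (hx : x ≠ 0) (i j : Fin (n+1)) :
    ContDiffAt ℝ (⊤ : ℕ∞) (fun y => bmat n H y i j) x := by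
  have h1 : ContDiffAt ℝ (⊤ : ℕ∞) (fun y => fderiv ℝ H y (EuclideanSpace.single j 1)) x := 
    (g.cd1 hx).clm_apply contDiffAt_const
  have h2 : ContDiffAt ℝ (⊤ : ℕ∞) (fun y => ehess n H y i j) x := 
    (h1.fderiv_right le_rfl).clm_apply contDiffAt_const
  have h3 : ∀ i, ContDiffAt ℝ (⊤ : ℕ∞) (fun y : Euc n => y i) x := fun i => by fun_prop
  exact h2.add ((g.cd hx).mul ((h3 i).mul (h3 j)))

lemma cd_volDens (g : Good n H) {x : Euc n} (hx : x ≠ 0) :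
    ContDiffAt ℝ (⊤ : ℕ∞) (volDens n H) x := by
  refine (cd_det (g.cd_bmat hx)).congr_of_eventuallyEq ?_
  filter_upwards [isOpen_compl_singleton.mem_nhds hx] with y hy
  exact g.volDens_eq hy

lemma volDens_pos (g : Good n H) {x : Euc n} (hx : ‖x‖ = 1) : 0 < volDens n H x := by
  rw [g.volDens_eq (sph_ne hx)]
  exact (g.posdef x (sph_mem hx)).det_pos

lemma volDens_cont (g : Good n H) : Continuous (fun θ : sphere (0 : Euc n) 1 => volDens n H θ) :=
  cont_sph fun _ hx => (g.cd_volDens hx).continuousAt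

end Good

def Om (ρ : Euc n → ℝ) : Set (Euc n) := {x | x ≠ 0 ∧ ‖x‖ < ρ (‖x‖⁻¹ • x)}

lemma norm_smul_inv {x : Euc n} (hx : x ≠ 0) : ‖(‖x‖⁻¹ • x)‖ = 1 := by
  have : ‖x‖ ≠ 0 := norm_ne_zero_iff.2 hx
  simp [norm_smul, this]

lemma Om_meas {ρ : Euc n → ℝ} (hρ : Continuous (fun θ : sphere (0 : Euc n) 1 => ρ θ)) :
    MeasurableSet (Om ρ) := by
  have h1 : Continuous (fun x : ({(0 : Euc n)}ᶜ : Set (Euc n)) => ‖x.1‖ - ρ (‖x.1‖⁻¹ • x.1)) := by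
    have h2 : Continuous (fun x : ({(0 : Euc n)}ᶜ : Set (Euc n)) =>
        (⟨‖x.1‖⁻¹ • x.1, sph_mem (norm_smul_inv x.2)⟩ : sphere (0 : Euc n) 1)) := by
      refine Continuous.subtype_mk ?_ _
      refine Continuous.smul (Continuous.inv₀ (continuous_norm.comp continuous_subtype_val) ?_) continuous_subtype_val
      exact fun x => norm_ne_zero_iff.2 x.2
    exact (continuous_norm.comp continuous_subtype_val).sub (hρ.comp h2)
  have h3 : Om ρ = Subtype.val '' {x : ({(0 : Euc n)}ᶜ : Set (Euc n)) | 
      ‖x.1‖ - ρ (‖x.1‖⁻¹ • x.1) < 0} := by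
    ext x
    simp [Om, and_comm]
  rw [h3]
  exact (measurableSet_singleton _).compl.subtype_image
    (isOpen_Iio.preimage h1).measurableSet

namespace Good

lemma TT_image_meas (g : Good n H) {ρ : Euc n → ℝ}
    (hρ : Continuous (fun θ : sphere (0 : Euc n) 1 => ρ θ)) : MeasurableSet (TT H '' Om ρ) :=
  measurable_image_of_fderivWithin (Om_meas hρ)
    (fun x hx => (g.TT_deriv hx.1).1.hasFDerivAt.hasFDerivWithinAt)
    (g.TT_inj.mono fun x hx => hx.1)

lemma TT_vol (g : Good n H) {ρ : Euc n → ℝ}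
    (hρ : Continuous (fun θ : sphere (0 : Euc n) 1 => ρ θ)) 
    (hρ0 : ∀ θ : sphere (0 : Euc n) 1, 0 < ρ θ) : 
    volume (TT H '' Om ρ) = 
      ENNReal.ofReal ((∫ θ : sphere (0 : Euc n) 1, ρ θ ^ (n+1) * volDens n H θ ∂(sphMeasure n)) / (n+1)) := by
  rw [← lintegral_abs_det_fderiv_eq_addHaar_image volume (Om_meas hρ) 
    (fun x hx => (g.TT_deriv hx.1).1.hasFDerivAt.hasFDerivWithinAt)
    (g.TT_inj.mono fun x hx => hx.1)]
  have hsub : Om ρ = Om ρ ∩ {(0 : Euc n)}ᶜ := by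
    ext x; simp only [Om, Set.mem_inter_iff, Set.mem_ofPred_eq]; constructor
    · exact fun h => ⟨h, h.1⟩
    · exact fun h => h.1
  have hm := Om_meas hρ
  have e1 : ∫⁻ x in Om ρ, ENNReal.ofReal |(fderiv ℝ (TT H) x).det| = 
      ∫⁻ x in {(0 : Euc n)}ᶜ, (Om ρ).indicator 
        (fun x => ENNReal.ofReal (volDens n H (‖x‖⁻¹ • x))) x := by
    rw [lintegral_indicator hm, Measure.restrict_restrict hm, ← hsub]
    refine setLIntegral_congr_fun hm fun x hx => ?_
    rw [(g.TT_deriv hx.1).2, abs_of_pos (g.volDens_pos (norm_smul_inv hx.1))]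
  have e2 : ∀ (θ : sphere (0 : Euc n) 1) (r : Set.Ioi (0:ℝ)), (Om ρ).indicator 
        (fun x => ENNReal.ofReal (volDens n H (‖x‖⁻¹ • x))) (r.1 • θ.1) = 
        {p : sphere (0 : Euc n) 1 × Set.Ioi (0:ℝ) | p.2.1 < ρ p.1}.indicator 
          (fun p => ENNReal.ofReal (volDens n H p.1)) (θ, r) := by
    intro θ r
    have hr : 0 < r.1 := r.2
    have hθ : ‖θ.1‖ = 1 := by simpa using θ.2
    have hne : r.1 • θ.1 ≠ 0 := smul_ne_zero hr.ne' (sph_ne hθ)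
    have hno : ‖r.1 • θ.1‖ = r.1 := by rw [norm_smul, hθ, Real.norm_eq_abs, abs_of_pos hr, mul_one]
    have hdi : r.1⁻¹ • r.1 • θ.1 = θ.1 := by rw [smul_smul, inv_mul_cancel₀ hr.ne', one_smul]
    have hmem : r.1 • θ.1 ∈ Om ρ ↔ r.1 < ρ θ := by
      simp only [Om, Set.mem_ofPred_eq, hno, hdi, and_iff_right hne]
    by_cases h : r.1 < ρ θ
    · rw [Set.indicator_of_mem (hmem.2 h), Set.indicator_of_mem (by simpa using h), hno, hdi]
    · rw [Set.indicator_of_notMem (fun hh => h (hmem.1 hh)), Set.indicator_of_notMem (by simpa using h)]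
  have hmeas : MeasurableSet {p : sphere (0 : Euc n) 1 × Set.Ioi (0:ℝ) | p.2.1 < ρ p.1} := by
    exact (isOpen_lt (by fun_prop) (hρ.comp continuous_fst)).measurableSet
  rw [e1, lint_polar]
  swap
  · simp only [e2]
    exact (ENNReal.measurable_ofReal.comp (g.volDens_cont.measurable.comp measurable_fst)).indicator hmeas
  simp only [e2]
  have e3 : ∀ θ : sphere (0 : Euc n) 1, ∫⁻ r, {p : sphere (0 : Euc n) 1 × Set.Ioi (0:ℝ) | p.2.1 < ρ p.1}.indicator 
          (fun p => ENNReal.ofReal (volDens n H p.1)) (θ, r) ∂(Measure.volumeIoiPow n) = 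
          ENNReal.ofReal (ρ θ ^ (n+1) * volDens n H θ / (n+1)) := by
    intro θ
    have : ∀ r, {p : sphere (0 : Euc n) 1 × Set.Ioi (0:ℝ) | p.2.1 < ρ p.1}.indicator 
          (fun p => ENNReal.ofReal (volDens n H p.1)) (θ, r) = 
          (Set.Iio (⟨ρ θ, hρ0 θ⟩ : Set.Ioi (0:ℝ))).indicator (fun _ => ENNReal.ofReal (volDens n H θ)) r := by
      intro r
      by_cases h : r.1 < ρ θ
      · rw [Set.indicator_of_mem (by simpa using h), Set.indicator_of_mem (by exact h)]
      · rw [Set.indicator_of_notMem (by simpa using h), Set.indicator_of_notMem (by exact h)]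
    simp only [this]
    rw [lintegral_indicator_const measurableSet_Iio, Measure.volumeIoiPow_apply_Iio, 
      ← ENNReal.ofReal_mul (g.volDens_pos (by simpa using θ.2)).le]
    congr 1; ring
  simp only [e3]
  rw [← ofReal_integral_eq_lintegral_ofReal, integral_div]
  · exact (int_sph ((hρ.pow _).mul g.volDens_cont)).div_const _
  · refine Filter.Eventually.of_forall fun θ => ?_
    have := hρ0 θ
    have := g.volDens_pos (x := θ) (by simpa using θ.2)
    simp only [Pi.zero_apply]
    positivity

lemma TT_surj (g : Good n H) {c : ℝ} {y : Euc n} (hy : y ≠ 0) 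
    (h : ∀ x : Euc n, ‖x‖ = 1 → ⟪x, y⟫ < c * H x) : y ∈ TT H '' Om (fun _ => c) := by
  have hcs : Continuous (fun θ : sphere (0 : Euc n) 1 => ⟪θ.1, y⟫ / H θ) := by
    refine cont_sph (F := fun x => ⟪x, y⟫ / H x) fun x hx => ?_
    exact ContinuousAt.div (by fun_prop) (g.cd hx).continuousAt (g.Hpos hx).ne'
  let η : sphere (0 : Euc n) 1 := ⟨‖y‖⁻¹ • y, sph_mem (norm_smul_inv hy)⟩
  have : Nonempty (sphere (0 : Euc n) 1) := ⟨η⟩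
  obtain ⟨θ, -, hmax⟩ := isCompact_univ.exists_isMaxOn Set.univ_nonempty hcs.continuousOn
  have hθ : ‖θ.1‖ = 1 := by simpa using θ.2
  have hθ0 := sph_ne hθ
  set m := ⟪θ.1, y⟫ / H θ with hm
  have hHθ := g.Hpos hθ0
  have hle : ∀ x, ⟪x, y⟫ ≤ m * H x := by
    intro x
    by_cases hx : x = 0
    · simp [hx, g.Hzero]
    · have hx1 := norm_smul_inv hx
      have := hmax (Set.mem_univ (⟨‖x‖⁻¹ • x, sph_mem hx1⟩ : sphere (0 : Euc n) 1))
      simp only [Set.mem_ofPred_eq] at this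
      have hxp : 0 < ‖x‖ := norm_pos_iff.2 hx
      rw [g.hom _ (by positivity), inner_smul_left] at this
      simp only [conj_trivial] at this
      rw [mul_div_mul_left _ _ (by positivity), div_le_iff₀ (g.Hpos hx)] at this
      exact this
  have heq : ⟪θ.1, y⟫ = m * H θ := by rw [hm]; field_simp
  have hm0 : 0 < m := by
    have h1 := hle y
    have h2 : 0 < ⟪y, y⟫ := real_inner_self_pos.2 hy
    have h3 := g.Hpos hy
    by_contra hc
    nlinarith [mul_nonneg (sub_nonneg.2 (not_lt.1 hc)) h3.le]
  have hmc : m < c := by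
    have := h θ hθ
    rw [heq] at this
    exact lt_of_mul_lt_mul_right this hHθ.le
  have hloc : IsLocalMin (fun x => m * H x - ⟪x, y⟫) θ.1 := by
    refine Filter.Eventually.of_forall fun x => ?_
    simp only [heq]
    have := hle x
    linarith
  have hder : HasFDerivAt (fun x => m * H x - ⟪x, y⟫) (m • fderiv ℝ H θ - innerSL ℝ y) θ.1 := by
    refine ((g.da hθ0).hasFDerivAt.const_mul m).sub ?_
    have := (innerSL ℝ y).hasFDerivAt (x := θ.1)
    refine this.congr_of_eventuallyEq (Filter.Eventually.of_forall fun x => ?_)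
    simp [real_inner_comm]
  have h0 := hloc.hasFDerivAt_eq_zero hder
  have hgy : m • gradient H θ = y := by
    refine ext_inner_right ℝ fun v => ?_
    have := congrArg (fun L => L v) h0
    simp at this
    rw [inner_smul_left, inner_gradient_left]
    simp
    linarith
  have hnm : ‖m • θ.1‖ = m := by rw [norm_smul, hθ, Real.norm_eq_abs, abs_of_pos hm0, mul_one]
  refine ⟨m • θ.1, ⟨smul_ne_zero hm0.ne' hθ0, by rw [hnm]; exact hmc⟩, ?_⟩
  rw [TT, hnm, g.grad_hom hm0, hgy]

end Good

end

section


variable {n : ℕ} {H : Euc n → ℝ}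

lemma coercive {E : Type*} [NormedAddCommGroup E] [NormedSpace ℝ E] [FiniteDimensional ℝ E]
    [Nontrivial E]
    {Q : E → ℝ} (hc : Continuous Q) (hh : ∀ (s : ℝ) v, Q (s • v) = s ^ 2 * Q v)
    (hp : ∀ v, v ≠ 0 → 0 < Q v) : ∃ c > 0, ∀ v, c * ‖v‖ ^ 2 ≤ Q v := by
  have : ProperSpace E := FiniteDimensional.proper ℝ E
  obtain ⟨u, hu, hmin⟩ := (isCompact_sphere (0:E) 1).exists_isMinOn
    (NormedSpace.sphere_nonempty.2 zero_le_one) hc.continuousOn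
  have hu1 : ‖u‖ = 1 := by simpa using hu
  refine ⟨Q u, hp u (by rintro rfl; simp at hu1), fun v => ?_⟩
  by_cases hv : v = 0
  · have := hh 0 v
    simp [hv] at this
    simp [hv, this]
  · have hn : ‖v‖ ≠ 0 := norm_ne_zero_iff.2 hv
    have := hmin (show ‖v‖⁻¹ • v ∈ sphere (0:E) 1 by simp [norm_smul, hn])
    simp only [Set.mem_ofPred_eq, hh] at this
    rw [inv_pow, ← div_eq_inv_mul, le_div_iff₀ (by positivity)] at this
    exact this

/-- pure-inequality core -/
lemma core_ineq {c ω h hω Nm Lm k0 s G T P a Dφ kθ B l Lv t : ℝ} (hs0 : 0 ≤ s)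
    (hω0 : 0 < ω) (hω1 : ω ≤ 1) (hh : 0 < h) (hNm : 0 ≤ Nm) (hLm : 0 ≤ Lm)
    (hc : hω * (4 + 3 * h + Nm + Lm + |k0|) ≤ c) (hωe : hω = ω)
    (hco : c * s ^ 2 ≤ (B + h * l * l) / 2 + h * t * Lv + h * t ^ 2 * k0)
    (hB : |B| ≤ Nm * s ^ 2) (hG : |G - B / 2| ≤ ω * s ^ 2) (hl : |l| ≤ ω * s)
    (hP : |P| ≤ ω) (ha : |a - h| ≤ ω) (hLv : |Lv| ≤ Lm * s) (hDφ : |Dφ - Lv| ≤ ω * s)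
    (hk : |kθ - k0| ≤ ω) (ht : |t| ≤ s) :
    0 ≤ G * (1 + P) + a * (t * Dφ + t ^ 2 * kθ) := by
  subst hωe
  have hs2 : 0 ≤ s ^ 2 := sq_nonneg s
  have t2 : t ^ 2 ≤ s ^ 2 := by rw [← sq_abs t]; exact pow_le_pow_left₀ (abs_nonneg _) ht 2
  have hll : h * l * l / 2 ≤ hω * h * s ^ 2 := by
    have : l * l ≤ (hω * s) * (hω * s) := by
      rw [← abs_mul_abs_self l]; exact mul_le_mul hl hl (abs_nonneg _) (by positivity)
    have h2 : (hω * s) * (hω * s) ≤ hω * s ^ 2 := by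
      have := mul_le_mul_of_nonneg_right hω1 (mul_nonneg hω0.le hs2)
      linarith
    have h3 : 0 ≤ h * (l * l) := mul_nonneg hh.le (mul_self_nonneg l)
    have h4 := mul_le_mul_of_nonneg_left (this.trans h2) hh.le
    linarith
  have hGP : |G * P| ≤ hω * (Nm + 1) * s ^ 2 := by
    have hG' : |G| ≤ (Nm + 1) * s ^ 2 := by
      have h1 := abs_le.1 hG
      have h2 := abs_le.1 hB
      have h3 : hω * s ^ 2 ≤ s ^ 2 := mul_le_of_le_one_left hs2 hω1
      have h4 : 0 ≤ Nm * s ^ 2 := mul_nonneg hNm hs2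
      rw [abs_le]
      constructor <;> linarith [h1.1, h1.2, h2.1, h2.2]
    rw [abs_mul]
    calc |G| * |P| ≤ ((Nm + 1) * s ^ 2) * hω := mul_le_mul hG' hP (abs_nonneg _) (by positivity)
      _ = _ := by ring
  have e1 : |t * (Dφ - Lv)| ≤ hω * s ^ 2 := by
    rw [abs_mul]
    calc _ ≤ s * (hω * s) := mul_le_mul ht hDφ (abs_nonneg _) hs0
      _ = _ := by ring
  have e2 : |t ^ 2 * (kθ - k0)| ≤ hω * s ^ 2 := by
    rw [abs_mul, abs_of_nonneg (sq_nonneg t)]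
    calc _ ≤ s ^ 2 * hω := mul_le_mul t2 hk (abs_nonneg _) hs2
      _ = _ := by ring
  have e3 : |t * Dφ + t ^ 2 * kθ| ≤ (Lm + |k0| + 2) * s ^ 2 := by
    have f1 : |t * Lv| ≤ Lm * s ^ 2 := by
      rw [abs_mul]
      calc _ ≤ s * (Lm * s) := mul_le_mul ht hLv (abs_nonneg _) hs0
        _ = _ := by ring
    have f2 : |t ^ 2 * k0| ≤ |k0| * s ^ 2 := by
      rw [abs_mul, abs_of_nonneg (sq_nonneg t)]
      calc _ ≤ s ^ 2 * |k0| := mul_le_mul_of_nonneg_right t2 (abs_nonneg _)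
        _ = _ := by ring
    have : t * Dφ + t ^ 2 * kθ = t * Lv + t ^ 2 * k0 + t * (Dφ - Lv) + t ^ 2 * (kθ - k0) := by ring
    rw [this]
    have hle : hω * s ^ 2 ≤ s ^ 2 := mul_le_of_le_one_left hs2 hω1
    refine (abs_add_le _ _).trans ?_
    have := (abs_add_le (t * Lv + t ^ 2 * k0) (t * (Dφ - Lv)))
    have := (abs_add_le (t * Lv) (t ^ 2 * k0))
    linarith
  have e4 : |(a - h) * (t * Dφ + t ^ 2 * kθ)| ≤ hω * (Lm + |k0| + 2) * s ^ 2 := by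
    rw [abs_mul]
    calc _ ≤ hω * ((Lm + |k0| + 2) * s ^ 2) := mul_le_mul ha e3 (abs_nonneg _) hω0.le
      _ = _ := by ring
  have key : G * (1 + P) + a * (t * Dφ + t ^ 2 * kθ) =
      ((B + h * l * l) / 2 + h * t * Lv + h * t ^ 2 * k0) + (G - B / 2) - h * l * l / 2 + G * P
      + h * (t * (Dφ - Lv)) + h * (t ^ 2 * (kθ - k0)) + (a - h) * (t * Dφ + t ^ 2 * kθ) := by ring
  rw [key]
  have g1 := (abs_le.1 hG).1
  have g2 := (abs_le.1 hGP).1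
  have g3 := mul_le_mul_of_nonneg_left (abs_le.1 e1).1 hh.le
  have g4 := mul_le_mul_of_nonneg_left (abs_le.1 e2).1 hh.le
  have g5 := (abs_le.1 e4).1
  have g6 := mul_le_mul_of_nonneg_right hc hs2
  linarith

namespace Good

lemma local_near (g : Good n H) {φ : Euc n → ℝ} (hφ : ∀ x, x ≠ 0 → ContDiffAt ℝ 1 φ x)
    {k : Euc n → ℝ} {θ₀ : Euc n} (hθ₀ : ‖θ₀‖ = 1)
    (hpos : ∀ (v : Euc n) (t : ℝ), (v, t) ≠ 0 → 
      0 < (hs H θ₀ v v + H θ₀ * ⟪θ₀, v⟫ * ⟪θ₀, v⟫) / 2 + H θ₀ * t * fderiv ℝ φ θ₀ v + H θ₀ * t ^ 2 * k θ₀) :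
    ∃ ω > 0, ∀ᶠ p : ℝ × (Euc n × Euc n) in nhds (0, (θ₀, θ₀)), ‖p.2.1‖ = 1 → ‖p.2.2‖ = 1 → 
      |k p.2.1 - k θ₀| ≤ ω →
      (1 + p.1 * φ p.2.1 - p.1 ^ 2 * k p.2.1) * fderiv ℝ H p.2.1 p.2.2 ≤ H p.2.2 * (1 + p.1 * φ p.2.2) := by
  have hθ0 := sph_ne hθ₀
  set h := H θ₀ with hh
  have hhp : 0 < h := g.Hpos hθ0
  set L := fderiv ℝ φ θ₀ with hL
  obtain ⟨c, hc, hco⟩ := coercive (E := Euc n × ℝ) 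
    (Q := fun p => (hs H θ₀ p.1 p.1 + h * ⟪θ₀, p.1⟫ * ⟪θ₀, p.1⟫) / 2 + h * p.2 * L p.1 + h * p.2 ^ 2 * k θ₀)
    (by fun_prop) (by intro s v; simp [inner_smul_right]; ring)
    (fun v hv => hpos v.1 v.2 hv)
  set Nm := ‖hs H θ₀‖ with hNme
  set Lm := ‖L‖ with hLme
  have hNm : 0 ≤ Nm := norm_nonneg (hs H θ₀)
  have hLm : 0 ≤ Lm := norm_nonneg L
  set C := 4 + 3 * h + Nm + Lm + |k θ₀| with hC
  have hCp : 0 < C := by positivity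
  set ω := min 1 (c / C) with hω
  have hω0 : 0 < ω := by positivity
  have hω1 : ω ≤ 1 := min_le_left _ _
  have hωC : ω * C ≤ c := by
    rw [← le_div_iff₀ hCp]; exact min_le_right _ _
  refine ⟨ω, hω0, ?_⟩
  have tp : Filter.Tendsto (fun p : ℝ × (Euc n × Euc n) => p.2) (nhds (0, (θ₀, θ₀))) (nhds (θ₀, θ₀)) :=
    continuous_snd.continuousAt
  have ev1 := tp.eventually (g.taylor hθ0 hω0)
  have hstr : HasStrictFDerivAt φ L θ₀ := (hφ θ₀ hθ0).hasStrictFDerivAt (by simp)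
  have ev2 := tp.eventually (hstr.isLittleO.def hω0)
  have ev3 : ∀ᶠ p : ℝ × (Euc n × Euc n) in nhds (0, (θ₀, θ₀)), |p.1 * φ p.2.2| ≤ ω := by
    have : ContinuousAt (fun p : ℝ × (Euc n × Euc n) => |p.1 * φ p.2.2|) (0, (θ₀, θ₀)) := by
      have h1 : ContinuousAt (fun p : ℝ × (Euc n × Euc n) => φ p.2.2) (0, (θ₀, θ₀)) :=
        ContinuousAt.comp (g := φ) (f := fun p : ℝ × (Euc n × Euc n) => p.2.2)
          (hφ θ₀ hθ0).continuousAt (by fun_prop)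
      exact (continuousAt_fst.mul h1).abs
    exact this.tendsto.eventually_le_const (by simpa using hω0) |>.mono fun p hp => hp
  have ev4 : ∀ᶠ p : ℝ × (Euc n × Euc n) in nhds (0, (θ₀, θ₀)), |fderiv ℝ H p.2.1 p.2.2 - h| ≤ ω := by
    have : ContinuousAt (fun p : ℝ × (Euc n × Euc n) => |fderiv ℝ H p.2.1 p.2.2 - h|) (0, (θ₀, θ₀)) := by
      have h1 : ContinuousAt (fun p : ℝ × (Euc n × Euc n) => fderiv ℝ H p.2.1) (0, (θ₀, θ₀)) :=
        ContinuousAt.comp (g := fderiv ℝ H) (f := fun p : ℝ × (Euc n × Euc n) => p.2.1)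
          (g.cd1 hθ0).continuousAt (by fun_prop)
      exact ((h1.clm_apply (by fun_prop)).sub continuousAt_const).abs
    exact this.tendsto.eventually_le_const (by simpa [g.euler hθ0, hh] using hω0) |>.mono fun p hp => hp
  have ev5 : ∀ᶠ p : ℝ × (Euc n × Euc n) in nhds (0, (θ₀, θ₀)), ‖θ₀ - p.2.1‖ + ‖p.2.2 - p.2.1‖ ≤ ω := by
    have : ContinuousAt (fun p : ℝ × (Euc n × Euc n) => ‖θ₀ - p.2.1‖ + ‖p.2.2 - p.2.1‖) (0, (θ₀, θ₀)) := by
      fun_prop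
    exact this.tendsto.eventually_le_const (by simpa using hω0) |>.mono fun p hp => hp
  filter_upwards [ev1, ev2, ev3, ev4, ev5] with p a1 a2 a3 a4 a5 n1 n2 hk
  obtain ⟨t, θ, x⟩ := p
  simp only at a1 a2 a3 a4 a5 n1 n2 hk ⊢
  set v := x - θ with hv
  set s := ‖(v, t)‖ with hs'
  have hvs : ‖v‖ ≤ s := by rw [hs', Prod.norm_def]; exact le_max_left _ _
  have hts : |t| ≤ s := by rw [hs', Prod.norm_def]; exact le_max_right _ _
  have hs0 : 0 ≤ s := norm_nonneg _
  have hθv : ⟪θ, v⟫ = - ‖v‖ ^ 2 / 2 := by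
    have : ‖v‖ ^ 2 = 2 - 2 * ⟪θ, x⟫ := by
      rw [hv, norm_sub_sq_real, n1, n2, real_inner_comm]; ring
    rw [this, hv, inner_sub_right]; simp [n1]; ring
  have hl : |⟪θ₀, v⟫| ≤ ω * s := by
    have e : ⟪θ₀, v⟫ = ⟪θ₀ - θ, v⟫ - ‖v‖ ^ 2 / 2 := by
      rw [inner_sub_left, hθv]; ring
    have e2 : |⟪θ₀ - θ, v⟫| ≤ ‖θ₀ - θ‖ * ‖v‖ := abs_real_inner_le_norm _ _
    have e3 : |⟪θ₀, v⟫| ≤ (‖θ₀ - θ‖ + ‖v‖) * ‖v‖ := by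
      rw [e]
      refine (abs_sub _ _).trans ?_
      rw [abs_of_nonneg (by positivity : 0 ≤ ‖v‖ ^ 2 / 2)]
      nlinarith [sq_nonneg ‖v‖]
    exact e3.trans (mul_le_mul a5 hvs (norm_nonneg _) hω0.le)
  have hv2 : ‖v‖ ^ 2 ≤ s ^ 2 := pow_le_pow_left₀ (norm_nonneg _) hvs 2
  have a2' : |φ x - φ θ - L v| ≤ ω * s := by
    have : ‖φ θ - φ x - L (θ - x)‖ ≤ ω * ‖θ - x‖ := a2
    rw [← norm_neg, norm_sub_rev θ x] at this
    have e : -(φ θ - φ x - L (θ - x)) = φ x - φ θ - L v := by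
      rw [hv, map_sub, map_sub]; ring
    rw [e, Real.norm_eq_abs] at this
    exact this.trans (mul_le_mul_of_nonneg_left hvs hω0.le)
  have := core_ineq (c := c) (ω := ω) (h := h) (hω := ω) (Nm := Nm) (Lm := Lm) (k0 := k θ₀) (s := s)
    (G := H x - fderiv ℝ H θ x) (T := 0) (P := t * φ x) (a := fderiv ℝ H θ x) (Dφ := φ x - φ θ)
    (kθ := k θ) (B := hs H θ₀ v v) (l := ⟪θ₀, v⟫) (Lv := L v) (t := t) hs0 hω0 hω1 hhp 
    hNm hLm hωC rfl (hco (v, t)) 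
    (by
      have := (hs H θ₀).le_opNorm₂ v v
      rw [Real.norm_eq_abs] at this
      refine this.trans ?_
      rw [mul_assoc, ← sq]
      exact mul_le_mul_of_nonneg_left hv2 hNm)
    (a1.trans (mul_le_mul_of_nonneg_left hv2 hω0.le)) hl a3 a4
    (by
      have := L.le_opNorm v
      rw [Real.norm_eq_abs] at this
      exact this.trans (mul_le_mul_of_nonneg_left hvs (norm_nonneg _)))
    a2' hk hts
  linarith

lemma local_est (g : Good n H) {φ : Euc n → ℝ} (hφ : ∀ x, x ≠ 0 → ContDiffAt ℝ 1 φ x)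
    {k : Euc n → ℝ} (hk : Continuous (fun θ : sphere (0 : Euc n) 1 => k θ))
    (hpos : ∀ θ : Euc n, ‖θ‖ = 1 → ∀ (v : Euc n) (t : ℝ), (v, t) ≠ 0 → 
      0 < (hs H θ v v + H θ * ⟪θ, v⟫ * ⟪θ, v⟫) / 2 + H θ * t * fderiv ℝ φ θ v + H θ * t ^ 2 * k θ) :
    ∀ᶠ t : ℝ in nhds 0, ∀ θ x : sphere (0 : Euc n) 1, 
      (1 + t * φ θ - t ^ 2 * k θ) * fderiv ℝ H θ x ≤ H x * (1 + t * φ x) := by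
  have key := (isCompact_univ (X := sphere (0 : Euc n) 1 × sphere (0 : Euc n) 1)).eventually_forall_of_forall_eventually 
    (x₀ := (0:ℝ)) (P := fun t p => 
      (1 + t * φ p.1 - t ^ 2 * k p.1) * fderiv ℝ H p.1 p.2 ≤ H p.2 * (1 + t * φ p.2)) ?_
  · filter_upwards [key] with t ht θ x
    exact ht (θ, x) (Set.mem_univ _)
  rintro ⟨θ, x⟩ -
  have hθ : ‖θ.1‖ = 1 := by simp
  have hx : ‖x.1‖ = 1 := by simp
  have hcφ : Continuous (fun θ : sphere (0 : Euc n) 1 => φ θ) :=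
    cont_sph fun y hy => (hφ y hy).continuousAt
  have hcH : Continuous (fun θ : sphere (0 : Euc n) 1 => H θ) :=
    cont_sph fun y hy => (g.cd hy).continuousAt
  have hcD : Continuous (fun θ : sphere (0 : Euc n) 1 => fderiv ℝ H θ) :=
    cont_sph fun y hy => (g.cd1 hy).continuousAt
  by_cases hne : x = θ
  · subst hne
    obtain ⟨ω, hω, hev⟩ := g.local_near hφ hx (hpos x hx)
    have tp : Filter.Tendsto (fun p : ℝ × (sphere (0 : Euc n) 1 × sphere (0 : Euc n) 1) => 
        (p.1, (p.2.1.1, p.2.2.1))) (nhds (0, (x, x))) (nhds (0, (x.1, x.1))) := by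
      have : Continuous (fun p : ℝ × (sphere (0 : Euc n) 1 × sphere (0 : Euc n) 1) => 
        (p.1, (p.2.1.1, p.2.2.1))) := by fun_prop
      exact this.continuousAt
    have hkc : ∀ᶠ p : ℝ × (sphere (0 : Euc n) 1 × sphere (0 : Euc n) 1) in nhds (0, (x, x)), 
        |k p.2.1 - k x| ≤ ω := by
      have : Continuous (fun p : ℝ × (sphere (0 : Euc n) 1 × sphere (0 : Euc n) 1) => 
        |k p.2.1 - k x|) := 
        ((hk.comp (continuous_fst.comp continuous_snd)).sub continuous_const).abs
      exact (this.tendsto (0, (x, x))).eventually_le_const (by simpa using hω) |>.mono fun p hp => hp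
    filter_upwards [tp.eventually hev, hkc] with p h1 h2
    exact h1 (by simp) (by simp) h2
  · have hst := g.supp_strict hθ hx (fun h => hne (Subtype.ext h))
    have c1 : Continuous (fun p : ℝ × (sphere (0 : Euc n) 1 × sphere (0 : Euc n) 1) => 
      (1 + p.1 * φ p.2.1 - p.1 ^ 2 * k p.2.1) * fderiv ℝ H p.2.1 p.2.2) := by
      have d1 := hcφ.comp (continuous_fst.comp (continuous_snd (X := ℝ) (Y := sphere (0 : Euc n) 1 × sphere (0 : Euc n) 1)))
      have d2 := hk.comp (continuous_fst.comp (continuous_snd (X := ℝ) (Y := sphere (0 : Euc n) 1 × sphere (0 : Euc n) 1)))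
      have d3 := hcD.comp (continuous_fst.comp (continuous_snd (X := ℝ) (Y := sphere (0 : Euc n) 1 × sphere (0 : Euc n) 1)))
      refine Continuous.mul ?_ (d3.clm_apply (by fun_prop))
      exact (continuous_const.add (continuous_fst.mul d1)).sub ((continuous_fst.pow 2).mul d2)
    have c2 : Continuous (fun p : ℝ × (sphere (0 : Euc n) 1 × sphere (0 : Euc n) 1) => 
      H p.2.2 * (1 + p.1 * φ p.2.2)) := by
      have d1 := hcφ.comp (continuous_snd.comp (continuous_snd (X := ℝ) (Y := sphere (0 : Euc n) 1 × sphere (0 : Euc n) 1)))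
      have d2 := hcH.comp (continuous_snd.comp (continuous_snd (X := ℝ) (Y := sphere (0 : Euc n) 1 × sphere (0 : Euc n) 1)))
      exact d2.mul (continuous_const.add (continuous_fst.mul d1))
    have := c1.continuousAt.eventually_lt c2.continuousAt (x₀ := ((0:ℝ), (θ, x))) (by simpa using hst)
    exact this.mono fun p hp => hp.le

end Good

end

section


variable {n : ℕ} {H : Euc n → ℝ}

lemma sphGrad_hom0 {φ : Euc n → ℝ} (hφ0 : ∀ c : ℝ, 0 < c → ∀ x : Euc n, φ (c • x) = φ x) (x : Euc n) :
    sphGrad n φ x = gradient φ x := by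
  unfold sphGrad
  congr 1
  ext y
  by_cases hy : y = 0
  · simp [hy]
  · exact hφ0 _ (inv_pos.2 (norm_pos_iff.2 hy)) y

/-- the vector B⁻¹ p -/
def Uv (H : Euc n → ℝ) (φ : Euc n → ℝ) (x : Euc n) : Euc n :=
  WithLp.toLp 2 ((bmat n H x)⁻¹ *ᵥ (gradient φ x : Euc n).ofLp)

lemma gNormSq_eq {φ : Euc n → ℝ} (hφ0 : ∀ c : ℝ, 0 < c → ∀ x : Euc n, φ (c • x) = φ x) (x : Euc n) :
    gNormSq n H φ x = H x * ((Uv H φ x).ofLp ⬝ᵥ (gradient φ x : Euc n).ofLp) := by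
  simp only [gNormSq, gInner, sphGrad_hom0 hφ0, dotProduct, Uv]

namespace Good

lemma bmat_unit (g : Good n H) {θ : Euc n} (hθ : ‖θ‖ = 1) : IsUnit (bmat n H θ).det :=
  (g.posdef θ (sph_mem hθ)).det_pos.ne'.isUnit

lemma form_U (g : Good n H) {φ : Euc n → ℝ} {θ : Euc n} (hθ : ‖θ‖ = 1) (v : Euc n) :
    hs H θ v (Uv H φ θ) + H θ * ⟪θ, v⟫ * ⟪θ, Uv H φ θ⟫ = fderiv ℝ φ θ v := by
  rw [← g.bmat_form (sph_ne hθ), Uv]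
  simp only
  rw [Matrix.mulVec_mulVec, Matrix.mul_nonsing_inv _ (g.bmat_unit hθ), Matrix.one_mulVec,
    ← inner_eq, ← inner_gradient_left, real_inner_comm]

lemma gNormSq_form (g : Good n H) {φ : Euc n → ℝ} 
    (hφ0 : ∀ c : ℝ, 0 < c → ∀ x : Euc n, φ (c • x) = φ x) {θ : Euc n} (hθ : ‖θ‖ = 1) :
    gNormSq n H φ θ = H θ * fderiv ℝ φ θ (Uv H φ θ) := by
  rw [gNormSq_eq hφ0, ← inner_eq, real_inner_comm, inner_gradient_left]

lemma hpos_k (g : Good n H) {φ : Euc n → ℝ} 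
    (hφ0 : ∀ c : ℝ, 0 < c → ∀ x : Euc n, φ (c • x) = φ x) {ε : ℝ} (hε : 0 < ε) 
    (θ : Euc n) (hθ : ‖θ‖ = 1) (v : Euc n) (t : ℝ) (hvt : (v, t) ≠ 0) :
    0 < (hs H θ v v + H θ * ⟪θ, v⟫ * ⟪θ, v⟫) / 2 + H θ * t * fderiv ℝ φ θ v + 
      H θ * t ^ 2 * (gNormSq n H φ θ / 2 + ε) := by
  have hH := g.Hpos (sph_ne hθ)
  set U := Uv H φ θ with hU
  have e1 := g.form_U (φ := φ) hθ v
  have e2 := g.form_U (φ := φ) hθ U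
  rw [← hU] at e1 e2
  set s := H θ * t with hs'
  have e3 : hs H θ (v + s • U) (v + s • U) + H θ * ⟪θ, v + s • U⟫ * ⟪θ, v + s • U⟫ =
      (hs H θ v v + H θ * ⟪θ, v⟫ * ⟪θ, v⟫) + 2 * s * fderiv ℝ φ θ v + s ^ 2 * fderiv ℝ φ θ U := by
    rw [← e1, ← e2]
    simp only [map_add, map_smul, _root_.add_apply, _root_.smul_apply, smul_eq_mul, inner_add_right,
      inner_smul_right, g.hs_symm (sph_ne hθ) U v]
    ring
  have e4 : 0 ≤ hs H θ (v + s • U) (v + s • U) + H θ * ⟪θ, v + s • U⟫ * ⟪θ, v + s • U⟫ := by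
    by_cases h : v + s • U = 0
    · simp [h]
    · exact (g.form_pos hθ h).le
  rw [g.gNormSq_form hφ0 hθ, ← hU]
  by_cases ht : t = 0
  · have hv : v ≠ 0 := by rintro rfl; exact hvt (by simp [ht])
    have := g.form_pos hθ hv
    have hs0 : s = 0 := by rw [hs', ht, mul_zero]
    rw [hs0, ht]
    simp only [zero_mul, ne_eq, OfNat.ofNat_ne_zero, not_false_eq_true, zero_pow, mul_zero, add_zero]
    linarith
  · have : 0 < H θ * t ^ 2 * ε := by positivity
    have e5 : H θ * t ^ 2 * (H θ * fderiv ℝ φ θ U / 2 + ε) = s ^ 2 * fderiv ℝ φ θ U / 2 + H θ * t ^ 2 * ε := by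
      rw [hs']; ring
    rw [e5]
    linarith

lemma bmat_cont (g : Good n H) : Continuous (fun θ : sphere (0 : Euc n) 1 => bmat n H θ) :=
  continuous_matrix fun i j => cont_sph (F := fun x => bmat n H x i j) 
    fun _ hx => (g.cd_bmat hx i j).continuousAt

lemma bmat_inv_cont (g : Good n H) : Continuous (fun θ : sphere (0 : Euc n) 1 => (bmat n H θ)⁻¹) := by
  simp only [Matrix.inv_def, Ring.inverse_eq_inv']
  refine Continuous.smul (Continuous.inv₀ g.bmat_cont.matrix_det fun θ => ?_) g.bmat_cont.matrix_adjugate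
  exact (g.posdef θ θ.2).det_pos.ne'

end Good

lemma fderiv_cont_sph {φ : Euc n → ℝ} (hφ : ∀ x, x ≠ 0 → ContDiffAt ℝ 1 φ x) :
    Continuous (fun θ : sphere (0 : Euc n) 1 => fderiv ℝ φ θ) :=
  cont_sph fun x hx => ((hφ x hx).fderiv_right (m := 0) le_rfl).continuousAt

lemma grad_cont_sph {φ : Euc n → ℝ} (hφ : ∀ x, x ≠ 0 → ContDiffAt ℝ 1 φ x) :
    Continuous (fun θ : sphere (0 : Euc n) 1 => gradient φ θ) :=
  (LinearIsometryEquiv.continuous _).comp (fderiv_cont_sph hφ)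

namespace Good

lemma Uv_cont (g : Good n H) {φ : Euc n → ℝ} (hφ : ∀ x, x ≠ 0 → ContDiffAt ℝ 1 φ x) :
    Continuous (fun θ : sphere (0 : Euc n) 1 => Uv H φ θ) := by
  unfold Uv
  refine (PiLp.continuous_toLp 2 _).comp ?_
  exact g.bmat_inv_cont.matrix_mulVec ((PiLp.continuous_ofLp 2 _).comp (grad_cont_sph hφ))

lemma H_cont (g : Good n H) : Continuous (fun θ : sphere (0 : Euc n) 1 => H θ) :=
  cont_sph fun _ hx => (g.cd hx).continuousAt

lemma gNormSq_cont (g : Good n H) {φ : Euc n → ℝ} (hφ : ∀ x, x ≠ 0 → ContDiffAt ℝ 1 φ x)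
    (hφ0 : ∀ c : ℝ, 0 < c → ∀ x : Euc n, φ (c • x) = φ x) :
    Continuous (fun θ : sphere (0 : Euc n) 1 => gNormSq n H φ θ) := by
  have : ∀ θ : sphere (0 : Euc n) 1, gNormSq n H φ θ = H θ * fderiv ℝ φ θ (Uv H φ θ) :=
    fun θ => g.gNormSq_form hφ0 (by simp)
  simp only [this]
  exact g.H_cont.mul ((fderiv_cont_sph hφ).clm_apply (g.Uv_cont hφ))

end Good

lemma pow_expand (d : ℕ) : ∃ R : ℝ × ℝ × ℝ → ℝ, Continuous R ∧ ∀ t a k : ℝ,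
    (1 + t * a - t ^ 2 * k) ^ d = 1 + t * (d * a) + t ^ 2 * (d * (d - 1) / 2 * a ^ 2 - d * k)
      + t ^ 3 * R (t, a, k) := by
  induction d with
  | zero => exact ⟨fun _ => 0, continuous_const, fun t a k => by simp⟩
  | succ d ih =>
    obtain ⟨R, hR, h⟩ := ih
    refine ⟨fun p => R p * (1 + p.1 * p.2.1 - p.1 ^ 2 * p.2.2) + 
      (d * (d - 1) / 2 * p.2.1 ^ 2 - d * p.2.2) * p.2.1 - d * p.2.1 * p.2.2 
      - p.1 * p.2.2 * (d * (d - 1) / 2 * p.2.1 ^ 2 - d * p.2.2), by fun_prop, fun t a k => ?_⟩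
    rw [pow_succ, h]
    push_cast
    ring

namespace Good

lemma vol_ineq (g : Good n H) {ρ₁ ρ₂ : Euc n → ℝ} 
    (h1 : Continuous (fun θ : sphere (0 : Euc n) 1 => ρ₁ θ)) (h2 : Continuous (fun θ : sphere (0 : Euc n) 1 => ρ₂ θ))
    (p1 : ∀ θ : sphere (0 : Euc n) 1, 0 < ρ₁ θ) (p2 : ∀ θ : sphere (0 : Euc n) 1, 0 < ρ₂ θ)
    {a₁ a₂ : Euc n → ℝ} (q1 : ∀ θ : sphere (0 : Euc n) 1, 0 < a₁ θ) (q2 : ∀ θ : sphere (0 : Euc n) 1, 0 < a₂ θ)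
    (ha : ∀ θ : sphere (0 : Euc n) 1, a₁ θ + a₂ θ = 2)
    (k1 : ∀ θ x : sphere (0 : Euc n) 1, ρ₁ θ * fderiv ℝ H θ x ≤ H x * a₁ x)
    (k2 : ∀ θ x : sphere (0 : Euc n) 1, ρ₂ θ * fderiv ℝ H θ x ≤ H x * a₂ x) :
    (∫ θ : sphere (0 : Euc n) 1, ρ₁ θ ^ (n+1) * volDens n H θ ∂(sphMeasure n)) * 
    (∫ θ : sphere (0 : Euc n) 1, ρ₂ θ ^ (n+1) * volDens n H θ ∂(sphMeasure n)) ≤ 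
    (∫ θ : sphere (0 : Euc n) 1, volDens n H θ ∂(sphMeasure n)) ^ 2 := by
  have aux : ∀ {ρ a : Euc n → ℝ}, (∀ θ : sphere (0 : Euc n) 1, 0 < a θ) → 
      (∀ θ x : sphere (0 : Euc n) 1, ρ θ * fderiv ℝ H θ x ≤ H x * a x) → 
      ∀ y ∈ TT H '' Om ρ, ∀ x : Euc n, ‖x‖ = 1 → ⟪x, y⟫ < H x * a x := by
    rintro ρ a hq hk y ⟨z, ⟨hz, hz'⟩, rfl⟩ x hx
    have hzp : 0 < ‖z‖ := norm_pos_iff.2 hz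
    have hmem := sph_mem (norm_smul_inv hz)
    have hfd : fderiv ℝ H z = fderiv ℝ H (‖z‖⁻¹ • z) := (g.fd_hom (inv_pos.2 hzp) z).symm
    rw [TT, inner_smul_right, real_inner_comm, inner_gradient_left, hfd]
    have hkk := hk ⟨_, hmem⟩ ⟨x, sph_mem hx⟩
    simp only at hkk
    rcases le_or_gt (fderiv ℝ H (‖z‖⁻¹ • z) x) 0 with h | h
    · calc _ ≤ 0 := mul_nonpos_of_nonneg_of_nonpos hzp.le h
        _ < _ := mul_pos (g.Hpos (sph_ne hx)) (hq ⟨x, sph_mem hx⟩)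
    · exact (mul_lt_mul_of_pos_right hz' h).trans_le hkk
  have hc2 : Continuous (fun θ : sphere (0 : Euc n) 1 => (fun _ : Euc n => (2:ℝ)) θ) := continuous_const
  have hm := g.TT_image_meas (ρ := fun _ : Euc n => (2:ℝ)) hc2
  have key := bm_euc (n+1) (g.TT_image_meas h1) (g.TT_image_meas h2) 
    (hm.union (measurableSet_singleton (0 : Euc n))) (by
      intro y₁ hy₁ y₂ hy₂
      by_cases h0 : y₁ + y₂ = 0
      · exact Or.inr h0
      · refine Or.inl (g.TT_surj h0 fun x hx => ?_)
        have e1 := aux q1 k1 y₁ hy₁ x hx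
        have e2 := aux q2 k2 y₂ hy₂ x hx
        have e3 := ha ⟨x, sph_mem hx⟩
        simp only at e3
        rw [inner_add_right]
        calc _ < H x * a₁ x + H x * a₂ x := add_lt_add e1 e2
          _ = (a₁ x + a₂ x) * H x := by ring
          _ = _ := by rw [e3])
  have hz : volume (TT H '' Om (fun _ : Euc n => (2:ℝ)) ∪ {0}) ≤ 
      volume (TT H '' Om (fun _ : Euc n => (2:ℝ))) := by
    refine (measure_union_le _ _).trans ?_
    simp
  have key2 := key.trans (pow_le_pow_left' hz 2)
  rw [g.TT_vol h1 p1, g.TT_vol h2 p2, g.TT_vol (ρ := fun _ : Euc n => (2:ℝ)) hc2 (fun _ => by norm_num)] at key2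
  set J1 := ∫ θ : sphere (0 : Euc n) 1, ρ₁ θ ^ (n+1) * volDens n H θ ∂(sphMeasure n)
  set J2 := ∫ θ : sphere (0 : Euc n) 1, ρ₂ θ ^ (n+1) * volDens n H θ ∂(sphMeasure n)
  have hV : ∫ θ : sphere (0 : Euc n) 1, (2:ℝ) ^ (n+1) * volDens n H θ ∂(sphMeasure n) = 
    2 ^ (n+1) * ∫ θ : sphere (0 : Euc n) 1, volDens n H θ ∂(sphMeasure n) := integral_const_mul _ _
  rw [hV] at key2
  set V := ∫ θ : sphere (0 : Euc n) 1, volDens n H θ ∂(sphMeasure n)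
  have hV0 : 0 ≤ V := integral_nonneg fun θ => (g.volDens_pos (by simp)).le
  have hJ1 : 0 ≤ J1 := integral_nonneg fun θ => 
    mul_nonneg (pow_nonneg (p1 θ).le _) (g.volDens_pos (by simp)).le
  have hJ2 : 0 ≤ J2 := integral_nonneg fun θ => 
    mul_nonneg (pow_nonneg (p2 θ).le _) (g.volDens_pos (by simp)).le
  have h4 : (4:ENNReal) ^ (n+1) = ENNReal.ofReal (4 ^ (n+1)) := by
    rw [ENNReal.ofReal_pow (by norm_num)]; norm_num
  rw [h4, ← ENNReal.ofReal_mul (by positivity), ← ENNReal.ofReal_mul (by positivity), 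
    ← ENNReal.ofReal_pow (by positivity), ENNReal.ofReal_le_ofReal_iff (by positivity)] at key2
  have e : ((2:ℝ) ^ (n+1) * V / (n+1)) ^ 2 = 4 ^ (n+1) * (V ^ 2 / (n+1) ^ 2) := by
    rw [div_pow, mul_pow, ← pow_mul, mul_comm (n+1) 2, pow_mul]; norm_num; ring
  rw [e] at key2
  have key3 := le_of_mul_le_mul_left key2 (by positivity)
  rw [div_mul_div_comm, ← sq, div_le_div_iff_of_pos_right (by positivity)] at key3
  exact key3

end Good

end

section


variable {n : ℕ} {H : Euc n → ℝ}

instance : Nonempty (sphere (0 : Euc n) 1) := (NormedSpace.sphere_nonempty.2 zero_le_one).to_subtype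

lemma int_lin4 {α : Type*} [MeasurableSpace α] {μ : Measure α} {a b c d : α → ℝ} (ha : Integrable a μ)
    (hb : Integrable b μ) (hc : Integrable c μ) (hd : Integrable d μ) (p q r s : ℝ) :
    ∫ x, (p * a x + q * b x + r * c x + s * d x) ∂μ = 
      p * ∫ x, a x ∂μ + q * ∫ x, b x ∂μ + r * ∫ x, c x ∂μ + s * ∫ x, d x ∂μ := by
  have ha' : Integrable (fun x => p * a x) μ := ha.const_mul _
  have hb' : Integrable (fun x => q * b x) μ := hb.const_mul _
  have hc' : Integrable (fun x => r * c x) μ := hc.const_mul _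
  have hd' : Integrable (fun x => s * d x) μ := hd.const_mul _
  have h1 : Integrable (fun x => p * a x + q * b x) μ := ha'.add hb'
  have h2 : Integrable (fun x => p * a x + q * b x + r * c x) μ := h1.add hc'
  rw [integral_add h2 hd', integral_add h1 hc', integral_add ha' hb', integral_const_mul,
    integral_const_mul, integral_const_mul, integral_const_mul]

lemma int_lin3 {α : Type*} [MeasurableSpace α] {μ : Measure α} {a b c : α → ℝ} (ha : Integrable a μ)
    (hb : Integrable b μ) (hc : Integrable c μ) (p q r : ℝ) :
    ∫ x, (p * a x + q * b x + r * c x) ∂μ = 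
      p * ∫ x, a x ∂μ + q * ∫ x, b x ∂μ + r * ∫ x, c x ∂μ := by
  simpa using int_lin4 ha hb hc ha p q r 0

lemma int_lin2 {α : Type*} [MeasurableSpace α] {μ : Measure α} {a b : α → ℝ} (ha : Integrable a μ)
    (hb : Integrable b μ) (p q : ℝ) :
    ∫ x, (p * a x + q * b x) ∂μ = p * ∫ x, a x ∂μ + q * ∫ x, b x ∂μ := by
  simpa using int_lin3 ha hb ha p q 0

namespace Good

lemma V_pos (g : Good n H) : 0 < ∫ θ : sphere (0 : Euc n) 1, volDens n H θ ∂(sphMeasure n) := by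
  rw [integral_pos_iff_support_of_nonneg (fun θ => (g.volDens_pos (by simp)).le) (int_sph g.volDens_cont)]
  have : Function.support (fun θ : sphere (0 : Euc n) 1 => volDens n H θ) = Set.univ := by
    ext θ; simpa using (g.volDens_pos (x := θ) (by simp)).ne'
  rw [this, Measure.measure_univ_pos, sphMeasure]
  exact Measure.toSphere_ne_zero _

lemma expand_J (g : Good n H) {a k : sphere (0 : Euc n) 1 → ℝ} (ha : Continuous a) (hk : Continuous k) :
    ∃ C : ℝ, 0 < C ∧ ∀ t : ℝ, |t| ≤ 1 →
      (∫ θ, volDens n H θ ∂(sphMeasure n)) + t * ((n+1) * ∫ θ, a θ * volDens n H θ ∂(sphMeasure n))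
      + t ^ 2 * (∫ θ, ((n+1) * n / 2 * a θ ^ 2 - (n+1) * k θ) * volDens n H θ ∂(sphMeasure n)) - C * |t| ^ 3 ≤
      ∫ θ, (1 + t * a θ - t ^ 2 * k θ) ^ (n+1) * volDens n H θ ∂(sphMeasure n) := by
  obtain ⟨R, hR, hexp⟩ := pow_expand (n+1)
  have hβ := g.volDens_cont
  have hc : Continuous (fun p : ℝ × sphere (0 : Euc n) 1 => R (p.1, a p.2, k p.2) * volDens n H p.2) := by
    have : Continuous (fun p : ℝ × sphere (0 : Euc n) 1 => volDens n H p.2) := hβ.comp continuous_snd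
    fun_prop
  obtain ⟨C, hC⟩ := ((isCompact_Icc (a := (-1:ℝ)) (b := 1)).prod 
    (isCompact_univ (X := sphere (0 : Euc n) 1))).exists_bound_of_continuousOn hc.continuousOn
  set m := (sphMeasure n).real Set.univ
  have hm : 0 ≤ m := measureReal_nonneg
  refine ⟨|C| * m + 1, by positivity, fun t ht => ?_⟩
  have ht' : t ∈ Set.Icc (-1:ℝ) 1 := abs_le.1 ht
  have hRt : Continuous (fun θ : sphere (0 : Euc n) 1 => R (t, a θ, k θ) * volDens n H θ) :=
    hc.comp (by fun_prop : Continuous fun θ : sphere (0 : Euc n) 1 => (t, θ))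
  have hb : ‖∫ θ, R (t, a θ, k θ) * volDens n H θ ∂(sphMeasure n)‖ ≤ |C| * m := by
    refine norm_integral_le_of_norm_le_const (Filter.Eventually.of_forall fun θ => ?_)
    exact (hC (t, θ) ⟨ht', Set.mem_univ _⟩).trans (le_abs_self C)
  have i1 := int_sph hβ
  have i2 : Integrable (fun θ : sphere (0 : Euc n) 1 => a θ * volDens n H θ) (sphMeasure n) :=
    int_sph (ha.mul hβ)
  have i3 : Integrable (fun θ : sphere (0 : Euc n) 1 => 
    ((n+1) * n / 2 * a θ ^ 2 - (n+1) * k θ) * volDens n H θ) (sphMeasure n) := 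
    int_sph (by fun_prop)
  have i4 := int_sph hRt
  have e : ∫ θ, (1 + t * a θ - t ^ 2 * k θ) ^ (n+1) * volDens n H θ ∂(sphMeasure n) = 
      (∫ θ, volDens n H θ ∂(sphMeasure n)) + t * ((n+1) * ∫ θ, a θ * volDens n H θ ∂(sphMeasure n))
      + t ^ 2 * (∫ θ, ((n+1) * n / 2 * a θ ^ 2 - (n+1) * k θ) * volDens n H θ ∂(sphMeasure n)) 
      + t ^ 3 * ∫ θ, R (t, a θ, k θ) * volDens n H θ ∂(sphMeasure n) := by
    have e := int_lin4 i1 i2 i3 i4 1 (t * (n+1)) (t ^ 2) (t ^ 3)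
    rw [one_mul, mul_assoc t] at e
    rw [← e]
    refine integral_congr_ae (Filter.Eventually.of_forall fun θ => ?_)
    simp only [hexp]
    push_cast
    ring
  rw [e]
  set r := ∫ θ, R (t, a θ, k θ) * volDens n H θ ∂(sphMeasure n)
  have h1 : |t ^ 3 * r| ≤ (|C| * m) * |t| ^ 3 := by
    rw [abs_mul, abs_pow, mul_comm]
    exact mul_le_mul_of_nonneg_right hb (by positivity)
  have h2 := (abs_le.1 h1).1
  have h3 : 0 ≤ |t| ^ 3 := by positivity
  linarith

lemma poincare0 (g : Good n H) {φ : Euc n → ℝ} (hφ : ∀ x, x ≠ 0 → ContDiffAt ℝ 1 φ x)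
    (hφ0 : ∀ c : ℝ, 0 < c → ∀ x : Euc n, φ (c • x) = φ x)
    (hmean : ∫ θ : sphere (0 : Euc n) 1, φ θ * volDens n H θ ∂(sphMeasure n) = 0) :
    n * (∫ θ : sphere (0 : Euc n) 1, φ θ ^ 2 * volDens n H θ ∂(sphMeasure n)) ≤ 
      ∫ θ : sphere (0 : Euc n) 1, gNormSq n H φ θ * volDens n H θ ∂(sphMeasure n) := by
  have hβ := g.volDens_cont
  have hq := g.gNormSq_cont hφ hφ0
  have hcφ : Continuous (fun θ : sphere (0 : Euc n) 1 => φ θ) :=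
    cont_sph fun y hy => (hφ y hy).continuousAt
  set V := ∫ θ : sphere (0 : Euc n) 1, volDens n H θ ∂(sphMeasure n) with hV
  have hVp : 0 < V := g.V_pos
  set Φ := ∫ θ : sphere (0 : Euc n) 1, φ θ ^ 2 * volDens n H θ ∂(sphMeasure n)
  set Q := ∫ θ : sphere (0 : Euc n) 1, gNormSq n H φ θ * volDens n H θ ∂(sphMeasure n)
  have main : ∀ ε : ℝ, 0 < ε → n * Φ ≤ Q + 2 * V * ε := by
    intro ε hε
    set k : Euc n → ℝ := fun θ => gNormSq n H φ θ / 2 + ε with hk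
    have hkc : Continuous (fun θ : sphere (0 : Euc n) 1 => k θ) := (hq.div_const 2).add continuous_const
    have hev := g.local_est hφ hkc (fun θ hθ v t => g.hpos_k hφ0 hε θ hθ v t)
    have hev2 : ∀ᶠ t : ℝ in nhds 0, ∀ θ : sphere (0 : Euc n) 1, 
        0 < 1 + t * φ θ - t ^ 2 * k θ ∧ 0 < 1 + t * φ θ := by
      have := (isCompact_univ (X := sphere (0 : Euc n) 1)).eventually_forall_of_forall_eventually 
        (x₀ := (0:ℝ)) (P := fun t θ => 0 < 1 + t * φ θ - t ^ 2 * k θ ∧ 0 < 1 + t * φ θ) ?_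
      · filter_upwards [this] with t ht θ using ht θ (Set.mem_univ _)
      · intro θ _
        have d1 := hcφ.comp (continuous_snd (X := ℝ) (Y := sphere (0 : Euc n) 1))
        have d2 := hkc.comp (continuous_snd (X := ℝ) (Y := sphere (0 : Euc n) 1))
        have c1 : Continuous (fun p : ℝ × sphere (0 : Euc n) 1 => 1 + p.1 * φ p.2) :=
          continuous_const.add (continuous_fst.mul d1)
        have c2 : Continuous (fun p : ℝ × sphere (0 : Euc n) 1 => 1 + p.1 * φ p.2 - p.1 ^ 2 * k p.2) :=
          c1.sub ((continuous_fst.pow 2).mul d2)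
        exact ((c2.tendsto (0, θ)).eventually_const_lt (by simp)).and 
          ((c1.tendsto (0, θ)).eventually_const_lt (by simp))
    obtain ⟨δ, hδ, hall⟩ := Metric.eventually_nhds_iff.1 (hev.and hev2)
    obtain ⟨C, hC, hJ⟩ := g.expand_J hcφ hkc
    set A2 := ∫ θ : sphere (0 : Euc n) 1, ((n+1) * n / 2 * φ θ ^ 2 - (n+1) * k θ) * volDens n H θ ∂(sphMeasure n) with hA2
    have hA2' : A2 = (n+1) / 2 * (n * Φ - Q - 2 * V * ε) := by
      have i1 := int_sph hβ
      have i2 : Integrable (fun θ : sphere (0 : Euc n) 1 => φ θ ^ 2 * volDens n H θ) (sphMeasure n) := 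
        int_sph ((hcφ.pow 2).mul hβ)
      have i3 : Integrable (fun θ : sphere (0 : Euc n) 1 => gNormSq n H φ θ * volDens n H θ) (sphMeasure n) :=
        int_sph (hq.mul hβ)
      have : A2 = ∫ θ : sphere (0 : Euc n) 1, ((n+1) / 2 * n * (φ θ ^ 2 * volDens n H θ) 
        + (-((n+1) / 2)) * (gNormSq n H φ θ * volDens n H θ) + (-((n+1) * ε)) * volDens n H θ) ∂(sphMeasure n) := by
        rw [hA2]
        refine integral_congr_ae (Filter.Eventually.of_forall fun θ => ?_)
        simp only [hk]; ring
      rw [this, int_lin3 i2 i3 i1]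
      change _ * Φ + _ * Q + _ * V = _
      ring
    have hA2n : A2 ≤ 0 := by
      by_contra hcon
      push Not at hcon
      set t := min (min (δ / 2) 1) (A2 / (2 * C)) with ht
      have ht0 : 0 < t := by positivity
      have htδ : t < δ := ((min_le_left _ _).trans (min_le_left _ _)).trans_lt (by linarith)
      have ht1 : t ≤ 1 := (min_le_left _ _).trans (min_le_right _ _)
      have htC : C * t < A2 := by
        have : t ≤ A2 / (2 * C) := min_le_right _ _
        rw [le_div_iff₀ (by positivity)] at this
        nlinarith
      have ha1 : |t| = t := abs_of_pos ht0
      have ha2 : |-t| = t := by rw [abs_neg, ha1]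
      obtain ⟨b1, b2⟩ := hall (y := t) (by simpa [ha1] using htδ)
      obtain ⟨b3, b4⟩ := hall (y := -t) (by simpa [ha1] using htδ)
      have j1 := hJ t (by rw [ha1]; exact ht1)
      have j2 := hJ (-t) (by rw [ha2]; exact ht1)
      rw [hmean, ha1] at j1
      rw [hmean, ha2] at j2
      have v := g.vol_ineq (ρ₁ := fun θ => 1 + t * φ θ - t ^ 2 * k θ) 
        (ρ₂ := fun θ => 1 + (-t) * φ θ - (-t) ^ 2 * k θ)
        (a₁ := fun θ => 1 + t * φ θ) (a₂ := fun θ => 1 + (-t) * φ θ)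
        ((continuous_const.add (continuous_const.mul hcφ)).sub (continuous_const.mul hkc))
        ((continuous_const.add (continuous_const.mul hcφ)).sub (continuous_const.mul hkc))
        (fun θ => (b2 θ).1) (fun θ => (b4 θ).1) 
        (fun θ => (b2 θ).2) (fun θ => (b4 θ).2) (fun θ => by ring) b1 b3
      have hp : 0 < t ^ 2 * (A2 - C * t) := by
        have := sub_pos.2 htC
        positivity
      have j1' : V < ∫ θ : sphere (0 : Euc n) 1, (1 + t * φ θ - t ^ 2 * k θ) ^ (n+1) * volDens n H θ ∂(sphMeasure n) := by
        refine lt_of_lt_of_le ?_ j1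
        nlinarith
      have j2' : V < ∫ θ : sphere (0 : Euc n) 1, (1 + (-t) * φ θ - (-t) ^ 2 * k θ) ^ (n+1) * volDens n H θ ∂(sphMeasure n) := by
        refine lt_of_lt_of_le ?_ j2
        nlinarith
      have := mul_lt_mul'' j1' j2' hVp.le hVp.le
      rw [← sq] at this
      exact absurd v (not_le.2 this)
    rw [hA2'] at hA2n
    have : (0:ℝ) < (n+1)/2 := by positivity
    have := nonpos_of_mul_nonpos_right hA2n this
    linarith
  refine le_of_forall_pos_le_add fun η hη => ?_
  have := main (η / (2 * V)) (by positivity)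
  have e : 2 * V * (η / (2 * V)) = η := by field_simp
  rwa [e] at this

lemma poincare (g : Good n H) {φ : Euc n → ℝ} (hφ : ∀ x, x ≠ 0 → ContDiffAt ℝ 1 φ x)
    (hφ0 : ∀ c : ℝ, 0 < c → ∀ x : Euc n, φ (c • x) = φ x) :
    n * ((∫ θ : sphere (0 : Euc n) 1, φ θ ^ 2 * volDens n H θ ∂(sphMeasure n)) - 
      (∫ θ : sphere (0 : Euc n) 1, φ θ * volDens n H θ ∂(sphMeasure n)) ^ 2 / 
      ∫ θ : sphere (0 : Euc n) 1, volDens n H θ ∂(sphMeasure n)) ≤ 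
      ∫ θ : sphere (0 : Euc n) 1, gNormSq n H φ θ * volDens n H θ ∂(sphMeasure n) := by
  have hβ := g.volDens_cont
  have hcφ : Continuous (fun θ : sphere (0 : Euc n) 1 => φ θ) :=
    cont_sph fun y hy => (hφ y hy).continuousAt
  have i1 := int_sph hβ
  have i2 : Integrable (fun θ : sphere (0 : Euc n) 1 => φ θ * volDens n H θ) (sphMeasure n) :=
    int_sph (hcφ.mul hβ)
  have i3 : Integrable (fun θ : sphere (0 : Euc n) 1 => φ θ ^ 2 * volDens n H θ) (sphMeasure n) := 
        int_sph ((hcφ.pow 2).mul hβ)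
  set V := ∫ θ : sphere (0 : Euc n) 1, volDens n H θ ∂(sphMeasure n) with hV
  have hVp : 0 < V := g.V_pos
  set A := ∫ θ : sphere (0 : Euc n) 1, φ θ * volDens n H θ ∂(sphMeasure n)
  set m := A / V with hm
  have hgr : ∀ x, gradient (fun y => φ y - m) x = gradient φ x := by
    intro x
    ext i
    rw [grad_apply, grad_apply, fderiv_sub_const]
  have h0 : ∀ c : ℝ, 0 < c → ∀ x : Euc n, (fun y => φ y - m) (c • x) = (fun y => φ y - m) x := 
    fun c hc x => by simp only [hφ0 c hc]
  have hq : ∀ x, gNormSq n H (fun y => φ y - m) x = gNormSq n H φ x := by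
    intro x
    rw [gNormSq_eq h0, gNormSq_eq hφ0, Uv, Uv, hgr]
  have key := g.poincare0 (φ := fun y => φ y - m) (fun x hx => (hφ x hx).sub contDiffAt_const) h0 ?_
  · simp only [hq] at key
    refine le_trans (le_of_eq ?_) key
    congr 1
    have : ∀ θ : sphere (0 : Euc n) 1, (φ θ - m) ^ 2 * volDens n H θ = 
      1 * (φ θ ^ 2 * volDens n H θ) + (-(2 * m)) * (φ θ * volDens n H θ) + m ^ 2 * volDens n H θ := fun θ => by ring
    simp only [this]
    rw [int_lin3 i3 i2 i1]
    change _ = _ + _ * A + m ^ 2 * V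
    rw [hm]
    field_simp
    ring
  · have : ∀ θ : sphere (0 : Euc n) 1, (φ θ - m) * volDens n H θ = 
      1 * (φ θ * volDens n H θ) + (-m) * volDens n H θ := fun θ => by ring
    simp only [this]
    rw [int_lin2 i2 i1]
    change _ * A + _ * V = 0
    rw [hm]; field_simp; ring

end Good

end

section


variable {n : ℕ} {H : Euc n → ℝ}

lemma sum_fd (L : Euc n →L[ℝ] ℝ) (v : Euc n) : ∑ i, v i * L (EuclideanSpace.single i 1) = L v := by
  conv_rhs => rw [Good.expand v]
  simp only [map_sum, map_smul, smul_eq_mul]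

def bmp : ContDiffBump (5/2 : ℝ) := ⟨3/2, 2, by norm_num, by norm_num⟩

def chi (x : Euc n) : ℝ := bmp (‖x‖ ^ 2)

lemma chi_cd : ContDiff ℝ 1 (chi (n := n)) :=
  bmp.contDiff.comp (contDiff_norm_sq ℝ)

lemma bmp_zero {s : ℝ} (h : s ≤ 1/2 ∨ 9/2 ≤ s) : bmp s = 0 := by
  apply bmp.zero_of_le_dist
  rw [Real.dist_eq]
  change (2:ℝ) ≤ _
  rcases h with h | h
  · rw [abs_of_nonpos (by linarith)]; linarith
  · rw [abs_of_nonneg (by linarith)]; linarith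

lemma chi_supp : HasCompactSupport (chi (n := n)) := by
  refine HasCompactSupport.intro (isCompact_closedBall (0 : Euc n) 3) fun x hx => ?_
  have : 3 < ‖x‖ := by simpa using hx
  exact bmp_zero (Or.inr (by nlinarith))

lemma chi_near : ∀ᶠ x : Euc n in nhds 0, chi x = 0 := by
  filter_upwards [Metric.ball_mem_nhds (0 : Euc n) (by norm_num : (0:ℝ) < 1/2)] with x hx
  have : ‖x‖ < 1/2 := by simpa using hx
  exact bmp_zero (Or.inl (by nlinarith [norm_nonneg x]))

lemma chi_int : Integrable (fun r : Set.Ioi (0:ℝ) => bmp (r.1 ^ 2)) (Measure.volumeIoiPow n) := by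
  have hc : Continuous (fun r : Set.Ioi (0:ℝ) => bmp (r.1 ^ 2)) := by
    have := bmp.continuous
    fun_prop
  set s : Set (Set.Ioi (0:ℝ)) := Set.Iio ⟨3, by simp⟩
  have hs : Measure.volumeIoiPow n s < ⊤ := by
    rw [Measure.volumeIoiPow_apply_Iio]; simp
  have : IntegrableOn (fun r : Set.Ioi (0:ℝ) => bmp (r.1 ^ 2)) s (Measure.volumeIoiPow n) := by
    refine Measure.integrableOn_of_bounded (M := 1) hs.ne hc.aestronglyMeasurable ?_
    refine Filter.Eventually.of_forall fun r => ?_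
    rw [Real.norm_eq_abs, abs_of_nonneg bmp.nonneg]
    exact bmp.le_one
  refine (integrableOn_iff_integrable_of_support_subset ?_).1 this
  intro r hr
  by_contra hcon
  have : (3:ℝ) ≤ r.1 := by
    have : ¬ (r < ⟨3, by simp⟩) := hcon
    exact not_lt.1 this
  exact hr (bmp_zero (Or.inr (by nlinarith)))

lemma norm_sph_smul (r : Set.Ioi (0:ℝ)) (θ : sphere (0 : Euc n) 1) : ‖r.1 • θ.1‖ = r.1 := by
  rw [norm_smul, Real.norm_eq_abs, abs_of_pos r.2]; simp

lemma chi_polar {D : Euc n → ℝ} (hD : Continuous (fun θ : sphere (0 : Euc n) 1 => D θ))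
    (hD0 : ∀ c : ℝ, 0 < c → ∀ x : Euc n, D (c • x) = D x) :
    ∫ x in {(0 : Euc n)}ᶜ, chi x * D x = 
      (∫ θ : sphere (0 : Euc n) 1, D θ ∂(sphMeasure n)) * 
        ∫ r : Set.Ioi (0:ℝ), bmp (r.1 ^ 2) ∂(Measure.volumeIoiPow n) := by
  have e : ∀ (θ : sphere (0 : Euc n) 1) (r : Set.Ioi (0:ℝ)), 
      chi (r.1 • θ.1) * D (r.1 • θ.1) = D θ * bmp (r.1 ^ 2) := by
    intro θ r
    rw [hD0 _ r.2, chi, norm_sph_smul, mul_comm]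
  rw [int_polar (fun x => chi x * D x)]
  · simp only [e, integral_const_mul, integral_mul_const]
  · simp only [e]
    exact (int_sph hD).mul_prod chi_int

lemma chi_pos : ∫ r : Set.Ioi (0:ℝ), bmp (r.1 ^ 2) ∂(Measure.volumeIoiPow n) ≠ 0 := by
  intro h
  have h1 := chi_polar (n := n) (D := fun _ => 1) continuous_const (fun _ _ _ => rfl)
  rw [h, mul_zero] at h1
  simp only [mul_one] at h1
  have h2 : 0 < ∫ x : Euc n, chi x := by
    refine Continuous.integral_pos_of_hasCompactSupport_nonneg_nonzero (x := EuclideanSpace.single 0 1)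
      chi_cd.continuous chi_supp (fun x => bmp.nonneg) ?_
    have : bmp 1 = 1 := bmp.one_of_mem_closedBall (by
      rw [Metric.mem_closedBall, Real.dist_eq]
      change _ ≤ (3/2:ℝ)
      norm_num [abs_le])
    simp [chi, this]
  rw [integral_eq_setIntegral (s := {(0 : Euc n)}ᶜ) (by simp [ae_iff])] at h2
  linarith

lemma int_fderiv_zero {G : Euc n → ℝ} (hG : ContDiff ℝ 1 G) (hs : HasCompactSupport G) (v : Euc n) :
    Integrable (fun x => fderiv ℝ G x v) ∧ ∫ x, fderiv ℝ G x v = 0 := by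
  have hi : Integrable (fun x => fderiv ℝ G x v) := 
    ((hG.continuous_fderiv (by simp)).clm_apply continuous_const).integrable_of_hasCompactSupport
      (hs.fderiv_apply (𝕜 := ℝ) v)
  refine ⟨hi, ?_⟩
  have hG' : Integrable G := hG.continuous.integrable_of_hasCompactSupport hs
  have := integral_bilinear_hasLineDerivAt_right_eq_neg_left_of_integrable (μ := volume)
    (f := fun _ : Euc n => (1:ℝ)) (f' := fun _ => 0) (g := G) (g' := fun x => fderiv ℝ G x v) (v := v)
    (B := ContinuousLinearMap.mul ℝ ℝ) (by simp) (by simpa using hi) (by simpa using hG')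
    (fun x _ => by simpa using (hasFDerivAt_const (1:ℝ) x).hasLineDerivAt v)
    (fun x _ => ((hG.differentiable (by simp)) x).hasFDerivAt.hasLineDerivAt v)
  simpa using this

lemma div_zero' {Z : Fin (n+1) → Euc n → ℝ} (hZ : ∀ i x, x ≠ 0 → ContDiffAt ℝ 1 (Z i) x)
    (hZ1 : ∀ i, ∀ c : ℝ, 0 < c → ∀ x : Euc n, Z i (c • x) = c * Z i x)
    (hZt : ∀ x : Euc n, x ≠ 0 → ∑ i, x i * Z i x = 0) :
    ∫ θ : sphere (0 : Euc n) 1, (∑ i, fderiv ℝ (Z i) θ (EuclideanSpace.single i 1)) ∂(sphMeasure n) = 0 := by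
  set D : Euc n → ℝ := fun x => ∑ i, fderiv ℝ (Z i) x (EuclideanSpace.single i 1) with hD
  have hDc : Continuous (fun θ : sphere (0 : Euc n) 1 => D θ) :=
    continuous_finsetSum _ fun i _ => (fderiv_cont_sph (hZ i)).clm_apply continuous_const
  have hD0 : ∀ c : ℝ, 0 < c → ∀ x : Euc n, D (c • x) = D x := by
    intro c hc x
    simp only [hD]
    refine Finset.sum_congr rfl fun i _ => ?_
    rw [fderiv_scale (k := c) hc (fun x => by simpa using hZ1 i c hc x), inv_mul_cancel₀ hc.ne', one_smul]
  have h1 := chi_polar hDc hD0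
  have hG : ∀ i, ContDiff ℝ 1 (fun x => chi x * Z i x) := by
    intro i
    rw [contDiff_iff_contDiffAt]
    intro x
    by_cases hx : x = 0
    · subst hx
      refine (contDiffAt_const (c := (0:ℝ))).congr_of_eventuallyEq ?_
      filter_upwards [chi_near (n := n)] with y hy
      simp [hy]
    · exact chi_cd.contDiffAt.mul (hZ i x hx)
  have hGs : ∀ i, HasCompactSupport (fun x => chi x * Z i x) := fun i => chi_supp.mul_right
  have h2 : ∫ x : Euc n, ∑ i, fderiv ℝ (fun x => chi x * Z i x) x (EuclideanSpace.single i 1) = 0 := by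
    rw [integral_finsetSum _ fun i _ => (int_fderiv_zero (hG i) (hGs i) _).1]
    exact Finset.sum_eq_zero fun i _ => (int_fderiv_zero (hG i) (hGs i) _).2
  rw [integral_eq_setIntegral (s := {(0 : Euc n)}ᶜ) (by simp [ae_iff])] at h2
  have h3 : ∫ x in {(0 : Euc n)}ᶜ, ∑ i, fderiv ℝ (fun x => chi x * Z i x) x (EuclideanSpace.single i 1) =
      ∫ x in {(0 : Euc n)}ᶜ, chi x * D x := by
    refine setIntegral_congr_fun (measurableSet_singleton _).compl fun x hx => ?_
    have hx : x ≠ 0 := hx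
    have hb : HasFDerivAt (chi (n := n)) (deriv bmp (‖x‖ ^ 2) • (2 • innerSL ℝ x)) x := by
      have a1 : HasDerivAt bmp (deriv bmp (‖x‖ ^ 2)) (‖x‖ ^ 2) := 
        ((bmp.contDiff (n := 1)).differentiable (by simp) _).hasDerivAt
      exact a1.comp_hasFDerivAt x (hasStrictFDerivAt_norm_sq x).hasFDerivAt
    have : ∀ i, fderiv ℝ (fun x => chi x * Z i x) x (EuclideanSpace.single i 1) = 
        chi x * fderiv ℝ (Z i) x (EuclideanSpace.single i 1) + 2 * deriv bmp (‖x‖ ^ 2) * (x i * Z i x) := by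
      intro i
      have hz := ((hZ i x hx).differentiableAt (by simp)).hasFDerivAt
      have hh : HasFDerivAt (fun x => chi x * Z i x) _ x := hb.mul hz
      rw [hh.fderiv]
      have hin : ⟪x, (EuclideanSpace.single i 1 : Euc n)⟫ = x i := by
        rw [EuclideanSpace.inner_single_right]; simp
      simp [hin]
      ring
    simp only [this, Finset.sum_add_distrib, ← Finset.mul_sum, hZt x hx, hD]
    simp
  rw [h3, h1] at h2
  exact (mul_eq_zero.1 h2).resolve_right chi_pos

namespace Good

lemma ibp (g : Good n H) {w : Euc n → ℝ} (hw : ∀ x, x ≠ 0 → ContDiffAt ℝ 1 w x)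
    (hw0 : ∀ c : ℝ, 0 < c → ∀ x : Euc n, w (c • x) = w x) :
    ∫ θ : sphere (0 : Euc n) 1, (H θ * fderiv ℝ w θ (gradient H θ) + 
      w θ * (H θ * (ehess n H θ).trace + ‖gradient H θ‖ ^ 2 - (n+1) * H θ ^ 2)) ∂(sphMeasure n) = 0 := by
  set P : Fin (n+1) → Euc n → ℝ := fun i x => fderiv ℝ H x (EuclideanSpace.single i 1) with hP
  set u : Euc n → ℝ := fun x => w x * H x ^ 2 * (‖x‖ ^ 2)⁻¹ with hu
  have hPc : ∀ i x, x ≠ 0 → ContDiffAt ℝ 1 (P i) x := fun i x hx => 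
    ((g.cd1 hx).of_le (by exact_mod_cast le_top)).clm_apply contDiffAt_const
  have hHc : ∀ x, x ≠ 0 → ContDiffAt ℝ 1 H x := fun x hx => (g.cd hx).of_le (by exact_mod_cast le_top)
  have huc : ∀ x, x ≠ 0 → ContDiffAt ℝ 1 u x := fun x hx => 
    ((hw x hx).mul ((hHc x hx).pow 2)).mul ((contDiff_norm_sq ℝ).contDiffAt.inv (by simpa using hx))
  have hwc : ∀ x, x ≠ 0 → ContDiffAt ℝ 1 (fun x => w x * H x) x := fun x hx => (hw x hx).mul (hHc x hx)
  have hxc : ∀ i (x : Euc n), ContDiffAt ℝ 1 (fun x : Euc n => x i) x := fun i x => by fun_prop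
  have hu0 : ∀ c : ℝ, 0 < c → ∀ x : Euc n, u (c • x) = u x := by
    intro c hc x
    simp only [hu, hw0 c hc, g.hom c hc, norm_smul, Real.norm_eq_abs, abs_of_pos hc]
    by_cases hx : x = 0
    · simp [hx]
    · have := norm_ne_zero_iff.2 hx
      field_simp
  have key := div_zero' (n := n) (Z := fun i x => (w x * H x) * P i x - u x * x i) 
    (fun i x hx => ((hwc x hx).mul (hPc i x hx)).sub ((huc x hx).mul (hxc i x))) ?_ ?_
  · rw [← key]
    refine integral_congr_ae (Filter.Eventually.of_forall fun θ => ?_)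
    have hθ : ‖θ.1‖ = 1 := by simp
    have hθ0 := sph_ne hθ
    have e : ∀ i, fderiv ℝ (fun x => (w x * H x) * P i x - u x * x i) θ (EuclideanSpace.single i 1) = 
        (w θ * H θ) * ehess n H θ i i + 
        (H θ * (gradient H θ i * fderiv ℝ w θ (EuclideanSpace.single i 1)) + w θ * gradient H θ i ^ 2)
         - (u θ + (θ.1 i) * fderiv ℝ u θ (EuclideanSpace.single i 1)) := by
      intro i
      have d1 := ((hw _ hθ0).differentiableAt (by simp)).hasFDerivAt
      have d2 := (g.da hθ0).hasFDerivAt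
      have d3 := ((hPc i _ hθ0).differentiableAt (by simp)).hasFDerivAt
      have d4 := ((huc _ hθ0).differentiableAt (by simp)).hasFDerivAt
      have d5 : HasFDerivAt (fun x : Euc n => x i) (EuclideanSpace.proj i : Euc n →L[ℝ] ℝ) θ.1 := 
        (EuclideanSpace.proj i : Euc n →L[ℝ] ℝ).hasFDerivAt
      have hh : HasFDerivAt (fun x : Euc n => (w x * H x) * P i x - u x * x i) _ θ.1 := 
        ((d1.mul d2).mul d3).sub (d4.mul d5)
      rw [hh.fderiv, grad_apply]
      simp [ehess, hP]
      ring
    simp only [e, Finset.sum_add_distrib, Finset.sum_sub_distrib, ← Finset.mul_sum]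
    have s1 : ∑ i, θ.1 i * fderiv ℝ u θ (EuclideanSpace.single i 1) = fderiv ℝ u θ θ := by
      exact sum_fd _ _
    have s2 : ∑ i, gradient H θ i * fderiv ℝ w θ (EuclideanSpace.single i 1) = fderiv ℝ w θ (gradient H θ) := sum_fd _ _
    have s3 : ∑ i, gradient H θ i ^ 2 = ‖gradient H θ‖ ^ 2 := by
      rw [EuclideanSpace.norm_sq_eq]; simp
    have s4 : fderiv ℝ u θ θ = 0 := hom0_fderiv_self (fun c hc => hu0 c hc _) ((huc _ hθ0).differentiableAt (by simp))
    have s5 : u θ = w θ * H θ ^ 2 := by simp [hu]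
    rw [s1, s2, s3, s4, s5, Matrix.trace]
    simp
    ring
  · intro i c hc x
    simp only [hP, hw0 c hc, g.hom c hc, g.fd_hom hc, hu0 c hc, PiLp.smul_apply, smul_eq_mul]
    ring
  · intro x hx
    have hn : ‖x‖ ≠ 0 := norm_ne_zero_iff.2 hx
    have s1 : ∑ i, x i * P i x = H x := (sum_fd _ _).trans (g.euler hx)
    have s2 : ∑ i, x i ^ 2 = ‖x‖ ^ 2 := by rw [EuclideanSpace.norm_sq_eq]; simp
    have : ∀ i, x i * (w x * H x * P i x - u x * x i) = w x * H x * (x i * P i x) - u x * x i ^ 2 := 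
      fun i => by ring
    change ∑ i, x i * (w x * H x * P i x - u x * x i) = 0
    rw [Finset.sum_congr rfl fun i _ => this i, Finset.sum_sub_distrib, ← Finset.mul_sum, ← Finset.mul_sum, s1, s2]
    simp only [hu]
    field_simp
    ring

end Good

end

section


variable {n : ℕ} {H : Euc n → ℝ}

namespace Good

lemma cdP (g : Good n H) (k : Fin (n+1)) {x : Euc n} (hx : x ≠ 0) :
    ContDiffAt ℝ 1 (fun y => fderiv ℝ H y (EuclideanSpace.single k 1)) x :=
  ((g.cd1 hx).of_le (by exact_mod_cast le_top)).clm_apply contDiffAt_const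

lemma gn_phi (g : Good n H) {f : Euc n → ℝ} (hf : ∀ x, x ≠ 0 → ContDiffAt ℝ 1 f x)
    (hf0 : ∀ c : ℝ, 0 < c → ∀ x : Euc n, f (c • x) = f x) {θ : Euc n} (hθ : ‖θ‖ = 1) :
    ∑ k, gNormSq n H (fun x => f x * fderiv ℝ H x (EuclideanSpace.single k 1)) θ = 
      H θ * (‖gradient H θ‖ ^ 2 * fderiv ℝ f θ (Uv H f θ) + 2 * f θ * fderiv ℝ f θ (gradient H θ) 
        + f θ ^ 2 * (ehess n H θ).trace) := by
  have hθ0 := sph_ne hθ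
  have hH := g.Hpos hθ0
  set U := Uv H f θ with hU
  have hfθ : fderiv ℝ f θ θ = 0 := 
    hom0_fderiv_self (fun c hc => hf0 c hc _) ((hf _ hθ0).differentiableAt (by simp))
  have hθU : ⟪θ, U⟫ = 0 := by
    have := g.form_U (φ := f) hθ θ
    rw [g.hs_self hθ0, hfθ, real_inner_self_eq_norm_sq, hθ] at this
    simpa [hH.ne'] using this
  have hUX : hs H θ U (gradient H θ) = fderiv ℝ f θ (gradient H θ) := by
    have := g.form_U (φ := f) hθ (gradient H θ)
    rw [← hU, hθU] at this
    rw [g.hs_symm hθ0, ← this]; ring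
  have hfd : ∀ k v, fderiv ℝ (fun x => f x * fderiv ℝ H x (EuclideanSpace.single k 1)) θ v = 
      gradient H θ k * fderiv ℝ f θ v + f θ * hs H θ v (EuclideanSpace.single k 1) := by
    intro k v
    have d1 := ((hf _ hθ0).differentiableAt (by simp)).hasFDerivAt
    have d2 : HasFDerivAt (fun y => fderiv ℝ H y (EuclideanSpace.single k 1)) 
        ((hs H θ).flip (EuclideanSpace.single k 1)) θ := by
      have := (g.da1 hθ0).hasFDerivAt.clm_apply (hasFDerivAt_const (EuclideanSpace.single k 1 : Euc n) θ)
      refine this.congr_fderiv ?_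
      ext v; simp [hs]
    have hh : HasFDerivAt (fun x => f x * fderiv ℝ H x (EuclideanSpace.single k 1)) _ θ := d1.mul d2
    rw [hh.fderiv, grad_apply]
    simp
    ring
  have hW : ∀ k, Uv H (fun x => f x * fderiv ℝ H x (EuclideanSpace.single k 1)) θ = 
      gradient H θ k • U + f θ • ((EuclideanSpace.single k 1 : Euc n) - θ k • θ) := by
    intro k
    have hB : bmat n H θ *ᵥ (gradient H θ k • U + f θ • ((EuclideanSpace.single k 1 : Euc n) - θ k • θ) : Euc n).ofLp = 
      (gradient (fun x => f x * fderiv ℝ H x (EuclideanSpace.single k 1)) θ : Euc n).ofLp := by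
      ext i
      rw [g.bmat_mulVec hθ0, grad_apply (fun x => f x * fderiv ℝ H x (EuclideanSpace.single k 1)), hfd]
      have hi := g.form_U (φ := f) hθ (EuclideanSpace.single i 1)
      rw [← hU, hθU] at hi
      have hin : ⟪θ, (EuclideanSpace.single k 1 : Euc n)⟫ = θ k := by
        rw [EuclideanSpace.inner_single_right]; simp
      simp only [map_add, map_smul, map_sub, g.hs_self' hθ0, inner_add_right, inner_smul_right,
        inner_sub_right, hθU, hin, real_inner_self_eq_norm_sq, hθ, smul_eq_mul]
      rw [← hi]; ring
    rw [Uv, ← hB, Matrix.mulVec_mulVec, Matrix.nonsing_inv_mul _ (g.bmat_unit hθ), Matrix.one_mulVec]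
  have hk0 : ∀ k, ∀ c : ℝ, 0 < c → ∀ x : Euc n, (fun x => f x * fderiv ℝ H x (EuclideanSpace.single k 1)) (c • x) = 
    (fun x => f x * fderiv ℝ H x (EuclideanSpace.single k 1)) x := by
    intro k c hc x
    simp only [hf0 c hc, g.fd_hom hc]
  have e : ∀ k, gNormSq n H (fun x => f x * fderiv ℝ H x (EuclideanSpace.single k 1)) θ = 
      H θ * (gradient H θ k ^ 2 * fderiv ℝ f θ U + f θ * (gradient H θ k * fderiv ℝ f θ (EuclideanSpace.single k 1)) 
        + f θ * (gradient H θ k * hs H θ U (EuclideanSpace.single k 1)) + f θ ^ 2 * ehess n H θ k k) := by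
    intro k
    rw [g.gNormSq_form (hk0 k) hθ, hfd, hW, g.ehess_eq hθ0]
    simp only [map_add, map_smul, map_sub, _root_.add_apply, _root_.smul_apply, _root_.sub_apply,
      g.hs_self hθ0, hfθ, smul_eq_mul, _root_.zero_apply]
    ring
  simp only [e, ← Finset.mul_sum, Finset.sum_add_distrib, ← Finset.sum_mul]
  rw [sum_fd (fderiv ℝ f θ), sum_fd (hs H θ U), hUX, Matrix.trace]
  have s3 : ∑ i, gradient H θ i ^ 2 = ‖gradient H θ‖ ^ 2 := by
    rw [EuclideanSpace.norm_sq_eq]; simp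
  rw [s3]
  simp only [Matrix.diag]
  ring

lemma gn_log (g : Good n H) {f : Euc n → ℝ} (hf : ∀ x, x ≠ 0 → ContDiffAt ℝ 1 f x)
    (hf0 : ∀ c : ℝ, 0 < c → ∀ x : Euc n, f (c • x) = f x) {θ : Euc n} (hθ : ‖θ‖ = 1) (hp : 0 < f θ) :
    f θ ^ 2 * gNormSq n H (fun y => Real.log (f y)) θ = H θ * fderiv ℝ f θ (Uv H f θ) := by
  have hθ0 := sph_ne hθ
  have hfd : fderiv ℝ (fun y => Real.log (f y)) θ = (f θ)⁻¹ • fderiv ℝ f θ :=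
    fderiv.log ((hf _ hθ0).differentiableAt (by simp)) hp.ne'
  have hU : Uv H (fun y => Real.log (f y)) θ = (f θ)⁻¹ • Uv H f θ := by
    have : (gradient (fun y => Real.log (f y)) θ : Euc n) = (f θ)⁻¹ • gradient f θ := by
      ext i
      rw [PiLp.smul_apply, grad_apply, grad_apply, hfd]; rfl
    rw [Uv, Uv, this, WithLp.ofLp_smul, Matrix.mulVec_smul, WithLp.toLp_smul]
  rw [g.gNormSq_form (fun c hc x => by simp only [hf0 c hc]) hθ, hfd, hU]
  simp only [map_smul, _root_.smul_apply, smul_eq_mul]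
  field_simp

def b0 (H : Euc n → ℝ) (y : Euc n) : ℝ := volDens n H (‖y‖⁻¹ • y)

lemma b0_cd (g : Good n H) {x : Euc n} (hx : x ≠ 0) : ContDiffAt ℝ 1 (b0 H) x := by
  have h1 : ContDiffAt ℝ 1 (fun y : Euc n => ‖y‖⁻¹ • y) x :=
    ((contDiffAt_norm ℝ hx).inv (norm_ne_zero_iff.2 hx)).smul contDiffAt_id
  have h2 : ContDiffAt ℝ 1 (volDens n H) (‖x‖⁻¹ • x) := 
    (g.cd_volDens (sph_ne (norm_smul_inv hx))).of_le (by exact_mod_cast le_top)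
  exact ContDiffAt.comp (g := volDens n H) (f := fun y : Euc n => ‖y‖⁻¹ • y) x h2 h1

lemma b0_hom (c : ℝ) (hc : 0 < c) (x : Euc n) : b0 H (c • x) = b0 H x := by
  unfold b0
  congr 1
  rw [norm_smul, Real.norm_eq_abs, abs_of_pos hc, smul_smul, mul_inv, mul_comm c⁻¹, mul_assoc, 
    inv_mul_cancel₀ hc.ne', mul_one]

lemma b0_sph {θ : Euc n} (hθ : ‖θ‖ = 1) : b0 H θ = volDens n H θ := by simp [b0, hθ]

lemma logQ_deriv (g : Good n H) {θ : Euc n} (hθ : ‖θ‖ = 1) :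
    volDens n H θ * ⟪sphGrad n (logQ n H) θ, H θ • gradient H θ⟫ = 
      (n+1) * volDens n H θ * (‖gradient H θ‖ ^ 2 - H θ ^ 2) + H θ * fderiv ℝ (b0 H) θ (gradient H θ) := by
  have hθ0 := sph_ne hθ
  have hH := g.Hpos hθ0
  have hβ := g.volDens_pos hθ
  have hev : (fun y => logQ n H (‖y‖⁻¹ • y)) =ᶠ[nhds θ] 
      fun y => (n+1) * (Real.log (H y) - Real.log (‖y‖ ^ 2) / 2) + Real.log (b0 H y) := by
    filter_upwards [isOpen_compl_singleton.mem_nhds hθ0] with y hy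
    have hy : y ≠ 0 := hy
    have hy1 := norm_smul_inv hy
    have hny : 0 < ‖y‖ := norm_pos_iff.2 hy
    have hb := g.volDens_pos hy1
    have hp := g.Hpos (sph_ne hy1)
    have e1 : H (‖y‖⁻¹ • y) ^ (n+2) / gaussCurv n H (‖y‖⁻¹ • y) = 
        H (‖y‖⁻¹ • y) ^ (n+1) * volDens n H (‖y‖⁻¹ • y) := by
      rw [gaussCurv, volDens, div_inv_eq_mul]; ring
    have hpH := g.Hpos hy
    rw [logQ, e1, Real.log_mul (by positivity) hb.ne', Real.log_pow, b0, g.hom _ (inv_pos.2 hny), 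
      Real.log_mul (by positivity) hpH.ne', Real.log_inv, Real.log_pow]
    push_cast
    ring
  have d1 := (g.da hθ0).hasFDerivAt.log hH.ne'
  have d2 := (hasStrictFDerivAt_norm_sq θ).hasFDerivAt.log (by simp [hθ])
  have d3 := ((g.b0_cd hθ0).differentiableAt (by simp)).hasFDerivAt.log (by rw [b0_sph hθ]; exact hβ.ne')
  have hh : HasFDerivAt (fun y => (n+1) * (Real.log (H y) - Real.log (‖y‖ ^ 2) / 2) + Real.log (b0 H y)) 
    (((n:ℝ)+1) • ((H θ)⁻¹ • fderiv ℝ H θ - (2:ℝ)⁻¹ • ((‖θ‖ ^ 2)⁻¹ • (2 • innerSL ℝ θ))) + (b0 H θ)⁻¹ • fderiv ℝ (b0 H) θ) θ := by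
    have := ((d1.sub (d2.const_mul (2:ℝ)⁻¹)).const_mul ((n:ℝ)+1)).add d3
    refine this.congr_of_eventuallyEq (Filter.Eventually.of_forall fun y => ?_)
    simp only [Pi.add_apply, Pi.sub_apply]
    ring
  rw [sphGrad, inner_smul_right, inner_gradient_left, hev.fderiv_eq, hh.fderiv, b0_sph hθ]
  have x1 : fderiv ℝ H θ (gradient H θ) = ‖gradient H θ‖ ^ 2 := by
    rw [← inner_gradient_left, real_inner_self_eq_norm_sq]
  have x2 : ⟪θ, gradient H θ⟫ = H θ := by rw [real_inner_comm, g.grad_inner_self hθ0]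
  simp [hθ, x1, x2]
  field_simp

lemma final (g : Good n H) {f : Euc n → ℝ} (hf : ∀ x, x ≠ 0 → ContDiffAt ℝ 1 f x)
    (hf0 : ∀ c : ℝ, 0 < c → ∀ x : Euc n, f (c • x) = f x) (hp : ∀ θ : Euc n, ‖θ‖ = 1 → 0 < f θ) :
    (∫ x : sphere (0 : Euc n) 1,
        volDens n H x * ((f x) ^ 2 *
          (⟪sphGrad n (logQ n H) x, H x • gradient H x⟫
            - ‖gradient H x‖ ^ 2 * gNormSq n H (fun y => Real.log (f y)) x))
        ∂(sphMeasure n))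
      ≤ (n : ℝ) * ‖∫ x : sphere (0 : Euc n) 1,
            volDens n H x • (f x • gradient H x) ∂(sphMeasure n)‖ ^ 2
          / ∫ x : sphere (0 : Euc n) 1, volDens n H x ∂(sphMeasure n) := by
  set φ : Fin (n+1) → Euc n → ℝ := fun k x => f x * fderiv ℝ H x (EuclideanSpace.single k 1) with hφ
  have hφc : ∀ k x, x ≠ 0 → ContDiffAt ℝ 1 (φ k) x := fun k x hx => (hf x hx).mul (g.cdP k hx)
  have hφ0 : ∀ k, ∀ c : ℝ, 0 < c → ∀ x : Euc n, φ k (c • x) = φ k x := by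
    intro k c hc x
    simp only [hφ, hf0 c hc, g.fd_hom hc]
  have hHc : ∀ x, x ≠ 0 → ContDiffAt ℝ 1 H x := fun x hx => (g.cd hx).of_le (by exact_mod_cast le_top)
  set w : Euc n → ℝ := fun x => f x ^ 2 * b0 H x with hw
  have hwc : ∀ x, x ≠ 0 → ContDiffAt ℝ 1 w x := fun x hx => ((hf x hx).pow 2).mul (g.b0_cd hx)
  have hw0 : ∀ c : ℝ, 0 < c → ∀ x : Euc n, w (c • x) = w x := fun c hc x => by
    simp only [hw, hf0 c hc, b0_hom c hc]
  have hβ := g.volDens_cont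
  have hX : Continuous (fun θ : sphere (0 : Euc n) 1 => gradient H θ) := grad_cont_sph hHc
  have hcf : Continuous (fun θ : sphere (0 : Euc n) 1 => f θ) := cont_sph fun x hx => (hf x hx).continuousAt
  have hcw : Continuous (fun θ : sphere (0 : Euc n) 1 => w θ) := cont_sph fun x hx => (hwc x hx).continuousAt
  have hcφ : ∀ k, Continuous (fun θ : sphere (0 : Euc n) 1 => φ k θ) := fun k => 
    cont_sph fun x hx => (hφc k x hx).continuousAt
  have htr : Continuous (fun θ : sphere (0 : Euc n) 1 => (ehess n H θ).trace) := by
    simp only [Matrix.trace, Matrix.diag, ehess, Matrix.of_apply]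
    exact continuous_finsetSum _ fun i _ => (fderiv_cont_sph fun x hx => g.cdP i hx).clm_apply continuous_const
  have hHs := g.H_cont
  set V := ∫ x : sphere (0 : Euc n) 1, volDens n H x ∂(sphMeasure n) with hV
  have hVp : 0 < V := g.V_pos
  have hq : ∀ k, Continuous (fun θ : sphere (0 : Euc n) 1 => gNormSq n H (φ k) θ) := fun k => 
    g.gNormSq_cont (hφc k) (hφ0 k)
  have j1 : ∀ k, Integrable (fun θ : sphere (0 : Euc n) 1 => φ k θ ^ 2 * volDens n H θ) (sphMeasure n) :=
    fun k => int_sph (((hcφ k).pow 2).mul hβ)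
  have j2 : ∀ k, Integrable (fun θ : sphere (0 : Euc n) 1 => gNormSq n H (φ k) θ * volDens n H θ) (sphMeasure n) :=
    fun k => int_sph ((hq k).mul hβ)
  have i1 : Integrable (fun θ : sphere (0 : Euc n) 1 => ∑ k, φ k θ ^ 2 * volDens n H θ) (sphMeasure n) :=
    integrable_finsetSum _ fun k _ => j1 k
  have i2 : Integrable (fun θ : sphere (0 : Euc n) 1 => ∑ k, gNormSq n H (φ k) θ * volDens n H θ) (sphMeasure n) :=
    integrable_finsetSum _ fun k _ => j2 k
  have i3 : Integrable (fun θ : sphere (0 : Euc n) 1 => (H θ * fderiv ℝ w θ (gradient H θ) + 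
      w θ * (H θ * (ehess n H θ).trace + ‖gradient H θ‖ ^ 2 - (n+1) * H θ ^ 2))) (sphMeasure n) := 
    int_sph ((hHs.mul ((fderiv_cont_sph hwc).clm_apply hX)).add (hcw.mul (((hHs.mul htr).add (hX.norm.pow 2)).sub 
      (continuous_const.mul (hHs.pow 2)))))
  have e : ∀ θ : sphere (0 : Euc n) 1, volDens n H θ * ((f θ) ^ 2 *
          (⟪sphGrad n (logQ n H) θ, H θ • gradient H θ⟫
            - ‖gradient H θ‖ ^ 2 * gNormSq n H (fun y => Real.log (f y)) θ)) = 
      n * (∑ k, φ k θ ^ 2 * volDens n H θ) + (-1) * (∑ k, gNormSq n H (φ k) θ * volDens n H θ) + 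
      1 * (H θ * fderiv ℝ w θ (gradient H θ) + 
      w θ * (H θ * (ehess n H θ).trace + ‖gradient H θ‖ ^ 2 - (n+1) * H θ ^ 2)) := by
    intro θ
    have hθ : ‖θ.1‖ = 1 := by simp
    have hθ0 := sph_ne hθ
    have a1 := g.logQ_deriv hθ
    have a2 := g.gn_log hf hf0 hθ (hp _ hθ)
    have a3 := g.gn_phi hf hf0 hθ
    have a4 : ∑ k, φ k θ ^ 2 = f θ ^ 2 * ‖gradient H θ‖ ^ 2 := by
      rw [EuclideanSpace.norm_sq_eq, Finset.mul_sum]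
      refine Finset.sum_congr rfl fun k _ => ?_
      rw [grad_apply, Real.norm_eq_abs, sq_abs]
      simp only [hφ]; ring
    have a5 : fderiv ℝ w θ (gradient H θ) = 2 * f θ * volDens n H θ * fderiv ℝ f θ (gradient H θ) + 
        f θ ^ 2 * fderiv ℝ (b0 H) θ (gradient H θ) := by
      have d1 := ((hf _ hθ0).differentiableAt (by simp)).hasFDerivAt
      have d2 := ((g.b0_cd hθ0).differentiableAt (by simp)).hasFDerivAt
      have hh : HasFDerivAt w _ θ.1 := (d1.pow 2).mul d2
      rw [hh.fderiv]
      simp [b0_sph hθ]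
      ring
    have a6 : w θ = f θ ^ 2 * volDens n H θ := by simp only [hw, b0_sph hθ]
    rw [← Finset.sum_mul, ← Finset.sum_mul, a3, a4, a5, a6]
    linear_combination f θ ^ 2 * a1 - volDens n H θ * ‖gradient H θ‖ ^ 2 * a2
  simp only [e]
  rw [int_lin3 i1 i2 i3, g.ibp hwc hw0, integral_finsetSum _ fun k _ => j1 k, integral_finsetSum _ fun k _ => j2 k]
  have hn : ‖∫ x : sphere (0 : Euc n) 1, volDens n H x • (f x • gradient H x) ∂(sphMeasure n)‖ ^ 2 = 
      ∑ k, (∫ θ : sphere (0 : Euc n) 1, φ k θ * volDens n H θ ∂(sphMeasure n)) ^ 2 := by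
    rw [EuclideanSpace.norm_sq_eq]
    refine Finset.sum_congr rfl fun k _ => ?_
    rw [Real.norm_eq_abs, sq_abs]
    congr 1
    have := (EuclideanSpace.proj k : Euc n →L[ℝ] ℝ).integral_comp_comm 
      (int_sph (hβ.smul (hcf.smul hX)))
    refine Eq.trans this.symm (integral_congr_ae (Filter.Eventually.of_forall fun θ => ?_))
    simp [hφ, grad_apply]
    ring
  rw [hn, mul_div_assoc, Finset.sum_div]
  have := Finset.sum_le_sum fun k (_ : k ∈ Finset.univ) => g.poincare (hφc k) (hφ0 k)
  rw [← Finset.mul_sum, Finset.sum_sub_distrib] at this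
  rw [← hV] at this
  linarith

end Good

end

end BMProof

/-- For a smooth, strictly convex body `K ⊂ ℝ^{n+1}` with the origin in its
interior, and every positive `f ∈ C²(S^n)` (encoded as a 0-homogeneous function on
`ℝ^{n+1} \ {0}`):
`∫ f² (⟨∇̄ log(h^{n+2}/𝒦), hX⟩ − |X|²|∇ log f|_g²) dV ≤ n |∫ f X dV|² / ∫ dV`. -/
theorem local_BM_inequality_general
    (n : ℕ) (hn : 2 ≤ n)
    (H : Euc n → ℝ) (K : Set (Euc n))
    (hK : K = {y : Euc n | ∀ x : Euc n, ⟪x, y⟫ ≤ H x})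
    (hhomog : ∀ c : ℝ, 0 < c → ∀ x : Euc n, H (c • x) = c * H x)
    (hconv : ConvexOn ℝ Set.univ H)
    (hsmooth : ContDiffOn ℝ (⊤ : ℕ∞) H {(0 : Euc n)}ᶜ)
    (hpos : ∀ x ∈ sphere (0 : Euc n) 1, 0 < H x)
    (hposdef : ∀ x ∈ sphere (0 : Euc n) 1, (bmat n H x).PosDef)
    (f : Euc n → ℝ)
    (hf0 : ∀ c : ℝ, 0 < c → ∀ x : Euc n, f (c • x) = f x)
    (hfC2 : ContDiffOn ℝ 2 f {(0 : Euc n)}ᶜ)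
    (hfpos : ∀ x ∈ sphere (0 : Euc n) 1, 0 < f x) :
    (∫ x : sphere (0 : Euc n) 1,
        volDens n H x * ((f x) ^ 2 *
          (⟪sphGrad n (logQ n H) x, H x • gradient H x⟫
            - ‖gradient H x‖ ^ 2 * gNormSq n H (fun y => Real.log (f y)) x))
        ∂(sphMeasure n))
      ≤ (n : ℝ) * ‖∫ x : sphere (0 : Euc n) 1,
            volDens n H x • (f x • gradient H x) ∂(sphMeasure n)‖ ^ 2
          / ∫ x : sphere (0 : Euc n) 1, volDens n H x ∂(sphMeasure n) := by
  have g : Good n H := ⟨hhomog, hconv, hsmooth, hpos, hposdef⟩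
  exact g.final (fun x hx => (hfC2.contDiffAt (isOpen_compl_singleton.mem_nhds hx)).of_le (by norm_num)) hf0
    (fun θ hθ => hfpos θ (sph_mem hθ))
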